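/- arXiv:2303.17794 — 7 statements merged into one kernel-verified Lean document; each statement's English description precedes it below -/
import Mathlib

section
/- Let n ≥ 1 and let K ⊂ ℝⁿ be a convex body containing the origin in its interior which is a local minimizer of the volume product: there exists ε > 0 such that vp(K) ≤ vp(L) for every convex body L ⊂ ℝⁿ containing the origin in its interior with Hausdorff distance d_H(K, L) < ε. Assume moreover that the barycenters of K and of K° are at the origin (which holds automatically for local minimizers). Then the symmetric matrix cov(K°) − (n+2)⁻² · cov(K)⁻¹ is positive semidefinite. -/
open MeasureTheory RealInnerProductSpace

noncomputable section

/-- The polar body `K° = {y | ⟨x, y⟩ ≤ 1 for all x ∈ K}`. -/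
def polarBody {n : ℕ} (K : Set (EuclideanSpace ℝ (Fin n))) : Set (EuclideanSpace ℝ (Fin n)) :=
  {y | ∀ x ∈ K, ⟪x, y⟫ ≤ 1}

/-- The volume product `vp(K) = |K| · |K°|`. -/
def vp {n : ℕ} (K : Set (EuclideanSpace ℝ (Fin n))) : ℝ :=
  (volume K).toReal * (volume (polarBody K)).toReal

/-- The barycenter `G_A = |A|⁻¹ ∫_A x dx`. -/
def bary {n : ℕ} (A : Set (EuclideanSpace ℝ (Fin n))) : EuclideanSpace ℝ (Fin n) :=
  (volume A).toReal⁻¹ • ∫ x in A, x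

/-- The covariance matrix `cov(K)_{ij} = |K|⁻¹ ∫_K x_i x_j dx`. -/
def covM {n : ℕ} (K : Set (EuclideanSpace ℝ (Fin n))) : Matrix (Fin n) (Fin n) ℝ :=
  Matrix.of fun i j => (volume K).toReal⁻¹ * ∫ x in K, x i * x j

theorem mv_taylor (m : ℕ) : ∃ C : ℝ, 0 ≤ C ∧ ∀ u : ℝ, |u| ≤ 1/2 →
    |((1+u)^m)⁻¹ - (1 - m*u + m*(m+1)/2*u^2)| ≤ C*|u|^3 := by
  induction m with
  | zero => exact ⟨0, le_rfl, fun u hu => by simp⟩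
  | succ m ih =>
    obtain ⟨C, hC, h⟩ := ih
    refine ⟨2*C + (m+1)*(m+2), by positivity, fun u hu => ?_⟩
    have h1 := h u hu
    have hu' := abs_le.1 hu
    have hp : (0:ℝ) < 1+u := by linarith
    have hinv : |(1+u)⁻¹| ≤ 2 := by
      rw [abs_of_pos (inv_pos.2 hp)]
      rw [inv_le_comm₀ hp (by norm_num)]; linarith
    have e : ((1+u)^(m+1))⁻¹ - (1 - ((m+1:ℕ):ℝ)*u + ((m+1:ℕ):ℝ)*(((m+1:ℕ):ℝ)+1)/2*u^2)
        = (1+u)⁻¹ * ((((1+u)^m)⁻¹ - (1 - m*u + m*(m+1)/2*u^2)) - (m+1)*(m+2)/2*u^3) := by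
      push_cast
      rw [pow_succ]
      field_simp
      ring
    rw [e, abs_mul]
    have h2 : |(((1+u)^m)⁻¹ - (1 - m*u + m*(m+1)/2*u^2)) - (m+1)*(m+2)/2*u^3|
        ≤ C*|u|^3 + (m+1)*(m+2)/2*|u|^3 := by
      refine (abs_sub _ _).trans ?_
      have : |((m:ℝ)+1)*(m+2)/2*u^3| = (m+1)*(m+2)/2*|u|^3 := by
        rw [abs_mul, abs_pow, abs_of_nonneg (by positivity)]
      linarith
    calc _ ≤ 2 * (C*|u|^3 + (m+1)*(m+2)/2*|u|^3) := by
          gcongr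
      _ = _ := by ring

def mvP {n : ℕ} (v x : EuclideanSpace ℝ (Fin n)) : EuclideanSpace ℝ (Fin n) :=
  (1 + ⟪x, v⟫)⁻¹ • x

theorem mvP_deriv {n : ℕ} (v x : EuclideanSpace ℝ (Fin n)) (h : 0 < 1 + ⟪x, v⟫) :
    ∃ f' : EuclideanSpace ℝ (Fin n) →L[ℝ] EuclideanSpace ℝ (Fin n),
      HasFDerivAt (mvP v) f' x ∧ f'.det = ((1 + ⟪x, v⟫)^(n+1))⁻¹ := by
  have h0 : HasFDerivAt (fun x : EuclideanSpace ℝ (Fin n) => 1 + ⟪x, v⟫) (innerSL ℝ v) x := by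
    have := ((innerSL ℝ v).hasFDerivAt (x := x)).const_add 1
    refine this.congr_of_eventuallyEq (Filter.Eventually.of_forall fun y => ?_)
    simp [real_inner_comm]
  have h1 := (hasDerivAt_inv h.ne').comp_hasFDerivAt x h0
  have h2 := h1.smul (hasFDerivAt_id x)
  refine ⟨_, h2, ?_⟩
  have e : (((Inv.inv ∘ fun x : EuclideanSpace ℝ (Fin n) => 1 + ⟪x, v⟫) x) •
      ContinuousLinearMap.id ℝ (EuclideanSpace ℝ (Fin n)) +
      ((-((1 + ⟪x, v⟫)^2)⁻¹ • innerSL ℝ v)).smulRight (id x)).toLinearMap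
      = (1 + ⟪x, v⟫)⁻¹ • LinearMap.transvection (innerSL ℝ v).toLinearMap
        (-(1 + ⟪x, v⟫)⁻¹ • x) := by
    ext y : 1
    simp [LinearMap.transvection.apply, smul_smul]
    congr 1
    have h3 := h.ne'
    field_simp
  rw [ContinuousLinearMap.det]
  refine (congrArg LinearMap.det e).trans ?_
  rw [LinearMap.det_smul, LinearMap.transvection.det]
  have e2 : (innerSL ℝ v).toLinearMap (-(1 + ⟪x, v⟫)⁻¹ • x) = -(1 + ⟪x, v⟫)⁻¹ * ⟪x, v⟫ := by
    rw [map_smul, smul_eq_mul]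
    congr 1
    exact real_inner_comm x v
  rw [e2, finrank_euclideanSpace_fin, pow_succ, inv_pow]
  have h3 := h.ne'
  field_simp
  ring

theorem mv_vol {n : ℕ} (S : Set (EuclideanSpace ℝ (Fin n))) (hS : IsCompact S)
    (w a : EuclideanSpace ℝ (Fin n)) (g : EuclideanSpace ℝ (Fin n) → ℝ) (hg : Continuous g)
    (h0 : ∀ y ∈ S, 0 < 1 + ⟪y + a, w⟫)
    (h1 : ∀ y ∈ S, ((1 + ⟪y + a, w⟫)^(n+1))⁻¹ ≤ g y) :
    (volume ((fun y => mvP w (y + a)) '' S)).toReal ≤ ∫ y in S, g y := by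
  have hg0 : ∀ y ∈ S, 0 ≤ g y := fun y hy => le_trans (by have := h0 y hy; positivity) (h1 y hy)
  choose! f' hf hd using fun x (hx : x ∈ S) => mvP_deriv w (x + a) (h0 x hx)
  have key := addHaar_image_le_lintegral_abs_det_fderiv (f := fun y => mvP w (y + a)) (f' := f')
    volume hS.measurableSet (fun x hx =>
      ((hasFDerivAt_comp_add_right a).2 (hf x hx)).hasFDerivWithinAt)
  refine ENNReal.toReal_le_of_le_ofReal (setIntegral_nonneg hS.measurableSet hg0) (key.trans ?_)
  rw [ofReal_integral_eq_lintegral_ofReal (hg.continuousOn.integrableOn_compact hS)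
    ((ae_restrict_iff' hS.measurableSet).2 (Filter.Eventually.of_forall hg0))]
  refine setLIntegral_mono' hS.measurableSet fun x hx => ENNReal.ofReal_le_ofReal ?_
  rw [hd x hx, abs_of_nonneg (by have := h0 x hx; positivity)]
  exact h1 x hx

theorem mv_conv {n : ℕ} (K : Set (EuclideanSpace ℝ (Fin n))) (hK : Convex ℝ K)
    (v : EuclideanSpace ℝ (Fin n)) (h0 : ∀ y ∈ K, 0 < 1 + ⟪y, v⟫) : Convex ℝ (mvP v '' K) := by
  rintro _ ⟨x, hx, rfl⟩ _ ⟨y, hy, rfl⟩ a b ha hb hab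
  have hx0 := h0 x hx
  have hy0 := h0 y hy
  set s := 1 + ⟪x, v⟫ with hs
  set r := 1 + ⟪y, v⟫ with hr
  have hD : 0 < a / s + b / r := by
    rcases ha.eq_or_lt with h | h
    · have : b = 1 := by linarith
      subst this
      positivity
    · positivity
  set D := a / s + b / r with hDd
  refine ⟨(a/s/D) • x + (b/r/D) • y, hK hx hy (by positivity) (by positivity) ?_, ?_⟩
  · rw [← add_div, div_self hD.ne']
  · have e : 1 + ⟪(a/s/D) • x + (b/r/D) • y, v⟫ = D⁻¹ := by
      rw [inner_add_left, real_inner_smul_left, real_inner_smul_left]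
      have e1 : (⟪x, v⟫ : ℝ) = s - 1 := by rw [hs]; ring
      have e2 : (⟪y, v⟫ : ℝ) = r - 1 := by rw [hr]; ring
      rw [e1, e2]
      have e3 : D * 1 = a / s + b / r := by rw [hDd]; ring
      have e4 : a / s * s = a := by field_simp
      have e5 : b / r * r = b := by field_simp
      have e6 : D * (1 + (a / s / D * (s - 1) + b / r / D * (r - 1))) = 1 := by
        have : D * (1 + (a / s / D * (s - 1) + b / r / D * (r - 1)))
          = D + (a / s * (s - 1) + b / r * (r - 1)) := by
          clear_value D
          field_simp
        rw [this]
        linarith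
      exact eq_inv_of_mul_eq_one_right e6
    unfold mvP
    rw [e, inv_inv, smul_add, smul_smul, smul_smul, smul_smul, smul_smul]
    rw [← hs, ← hr]
    clear_value s r D
    congr 2 <;> field_simp

theorem mv_polar {n : ℕ} (K : Set (EuclideanSpace ℝ (Fin n))) 
    (v w : EuclideanSpace ℝ (Fin n)) (h0 : ∀ y ∈ K, 0 < 1 + ⟪y, v⟫)
    (hw : w ∈ mvP v '' K) :
    polarBody ((fun x => x + w) '' (mvP v '' K)) ⊆ (fun y => mvP w (y + v)) '' polarBody K := by
  intro z hz
  have hz' : ∀ x ∈ K, ⟪mvP v x + w, z⟫ ≤ 1 := fun x hx => hz _ ⟨_, ⟨x, hx, rfl⟩, rfl⟩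
  have hwz : 0 < 1 - ⟪w, z⟫ := by
    obtain ⟨x, hx, rfl⟩ := hw
    have := hz' x hx
    rw [inner_add_left] at this
    linarith
  refine ⟨(1 - ⟪w, z⟫)⁻¹ • z - v, ?_, ?_⟩
  · intro x hx
    have h1 := hz' x hx
    have h2 := h0 x hx
    rw [inner_add_left, mvP, real_inner_smul_left] at h1
    rw [inner_sub_right, real_inner_smul_right]
    have h3 : ⟪x, z⟫ ≤ (1 + ⟪x, v⟫) * (1 - ⟪w, z⟫) := by
      have : (1 + ⟪x, v⟫)⁻¹ * ⟪x, z⟫ ≤ 1 - ⟪w, z⟫ := by linarith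
      rwa [inv_mul_le_iff₀ h2] at this
    have h4 : (1 - ⟪w, z⟫)⁻¹ * ⟪x, z⟫ ≤ 1 + ⟪x, v⟫ := by
      rw [inv_mul_le_iff₀ hwz]; linarith
    linarith
  · simp only [sub_add_cancel]
    unfold mvP
    rw [real_inner_smul_left, real_inner_comm w z, smul_smul]
    have : (1 + (1 - ⟪w, z⟫)⁻¹ * ⟪w, z⟫)⁻¹ * (1 - ⟪w, z⟫)⁻¹ = 1 := by
      have : 1 + (1 - ⟪w, z⟫)⁻¹ * ⟪w, z⟫ = (1 - ⟪w, z⟫)⁻¹ := by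
        field_simp
        ring
      rw [this]; field_simp
    rw [this, one_smul]

theorem mv_ball {n : ℕ} (K : Set (EuclideanSpace ℝ (Fin n))) (r : ℝ) (hr : 0 < r)
    (hK : Metric.closedBall 0 r ⊆ K) (v : EuclideanSpace ℝ (Fin n)) (hv : ‖v‖ * r ≤ 1)
    (z : EuclideanSpace ℝ (Fin n)) (hz : ‖z‖ ≤ r / 2) : z ∈ mvP v '' K := by
  have h1 : |⟪z, v⟫| ≤ 1 / 2 := by
    refine (abs_real_inner_le_norm z v).trans ?_
    nlinarith [norm_nonneg z, norm_nonneg v]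
  have h2 := abs_le.1 h1
  have h3 : 0 < 1 - ⟪z, v⟫ := by linarith
  refine ⟨(1 - ⟪z, v⟫)⁻¹ • z, hK ?_, ?_⟩
  · rw [mem_closedBall_zero_iff, norm_smul, norm_inv, Real.norm_eq_abs, abs_of_pos h3,
      inv_mul_le_iff₀ h3]
    nlinarith
  · unfold mvP
    rw [real_inner_smul_left, smul_smul]
    have : (1 + (1 - ⟪z, v⟫)⁻¹ * ⟪z, v⟫)⁻¹ * (1 - ⟪z, v⟫)⁻¹ = 1 := by
      have : 1 + (1 - ⟪z, v⟫)⁻¹ * ⟪z, v⟫ = (1 - ⟪z, v⟫)⁻¹ := by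
        field_simp
        ring
      rw [this]; field_simp
    rw [this, one_smul]

theorem mv_expand {n : ℕ} (S : Set (EuclideanSpace ℝ (Fin n))) (hS : IsCompact S)
    (hb : ∫ x in S, x = 0) (a w : EuclideanSpace ℝ (Fin n)) :
    ∃ C : ℝ, ∃ δ > 0, ∀ t : ℝ, 0 < t → t < δ →
      (∀ y ∈ S, 1/2 ≤ 1 + ⟪y + t • a, t • w⟫) ∧
      (volume ((fun y => mvP (t • w) (y + t • a)) '' S)).toReal ≤
        (volume S).toReal + t^2 * ((n+1)*(n+2)/2 * (∫ y in S, ⟪y, w⟫^2)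
          - (n+1) * ((volume S).toReal * ⟪a, w⟫)) + C * t^3 := by
  obtain ⟨C0, hC0, hT⟩ := mv_taylor (n+1)
  obtain ⟨R, hR⟩ := hS.isBounded.exists_norm_le
  set M : ℝ := |R| * ‖w‖ + ‖a‖ * ‖w‖ + 1 with hM
  have hM1 : 1 ≤ M := by rw [hM]; have := norm_nonneg w; have := norm_nonneg a; nlinarith [abs_nonneg R, mul_nonneg (abs_nonneg R) (norm_nonneg w), mul_nonneg (norm_nonneg a) (norm_nonneg w)]
  have hq : |(⟪a, w⟫ : ℝ)| ≤ M := by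
    refine (abs_real_inner_le_norm a w).trans ?_
    have := mul_nonneg (abs_nonneg R) (norm_nonneg w)
    linarith
  have hp : ∀ y ∈ S, |(⟪y, w⟫ : ℝ)| ≤ M := by
    intro y hy
    refine (abs_real_inner_le_norm y w).trans ?_
    have := mul_nonneg (norm_nonneg a) (norm_nonneg w)
    have := mul_le_mul_of_nonneg_right ((hR y hy).trans (le_abs_self R)) (norm_nonneg w)
    linarith
  set c : ℝ := (n+1)*(n+2)/2 with hc
  have hc0 : 0 ≤ c := by positivity
  set D : ℝ := 3 * c * M^2 + 8 * C0 * M^3 with hD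
  set q : ℝ := ⟪a, w⟫ with hqd
  refine ⟨D * (volume S).toReal, 1 / (4 * M), by positivity, fun t ht htδ => ?_⟩
  have htM : t * M ≤ 1/4 := by
    rw [lt_div_iff₀ (by positivity)] at htδ; linarith
  have ht1 : t ≤ 1 := by nlinarith
  have hu : ∀ y : EuclideanSpace ℝ (Fin n), (⟪y + t • a, t • w⟫ : ℝ) = t * ⟪y, w⟫ + t^2 * q := by
    intro y
    rw [inner_add_left, real_inner_smul_right, real_inner_smul_right, real_inner_smul_left]
    ring
  have hub : ∀ y ∈ S, |(⟪y + t • a, t • w⟫ : ℝ)| ≤ 2 * (t * M) := by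
    intro y hy
    rw [hu]
    refine (abs_add_le _ _).trans ?_
    rw [abs_mul, abs_mul, abs_of_pos ht, abs_of_pos (by positivity : 0 < t^2)]
    have h1 := mul_le_mul_of_nonneg_left (hp y hy) ht.le
    have h2 := mul_le_mul_of_nonneg_left hq (sq_nonneg t)
    have h3 : t^2 * M ≤ t * M := by
      apply mul_le_mul_of_nonneg_right _ (by linarith)
      nlinarith
    linarith
  have hhalf : ∀ y ∈ S, 1/2 ≤ 1 + (⟪y + t • a, t • w⟫ : ℝ) := by
    intro y hy
    have := abs_le.1 (hub y hy)
    linarith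
  refine ⟨hhalf, ?_⟩
  have hcont : Continuous fun y : EuclideanSpace ℝ (Fin n) => (⟪y, w⟫ : ℝ) := by fun_prop
  refine (mv_vol S hS (t • w) (t • a)
    (fun y => ((1 - (n+1) * t^2 * q + D * t^3) - ((n+1) * t) * ⟪y, w⟫) + c * t^2 * ⟪y, w⟫^2)
    (by fun_prop) (fun y hy => by linarith [hhalf y hy]) ?_).trans (le_of_eq ?_)
  · intro y hy
    have h1 := (abs_le.1 (hT _ ((hub y hy).trans (by linarith)))).2
    have h2 : |(⟪y + t • a, t • w⟫ : ℝ)|^3 ≤ (2 * (t * M))^3 :=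
      pow_le_pow_left₀ (abs_nonneg _) (hub y hy) 3
    have h3 := mul_le_mul_of_nonneg_left h2 hC0
    rw [hu] at h1 h3 ⊢
    set p : ℝ := ⟪y, w⟫ with hpd
    have hpM := hp y hy
    rw [← hpd] at hpM
    have h4 : (t * p + t^2*q)^2 ≤ t^2*p^2 + 3 * t^3 * M^2 := by
      have h5 : p * q ≤ M^2 := by
        refine (le_abs_self _).trans ?_
        rw [abs_mul, sq]
        exact mul_le_mul hpM hq (abs_nonneg _) (by linarith)
      have h6 : q^2 ≤ M^2 := by
        rw [← sq_abs]; exact pow_le_pow_left₀ (abs_nonneg _) hq 2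
      have h7 : t^4 * q^2 ≤ t^3 * M^2 := by
        apply mul_le_mul _ h6 (sq_nonneg _) (by positivity)
        calc t^4 = t^3 * t := by ring
          _ ≤ t^3 * 1 := by gcongr
          _ = t^3 := by ring
      have h8 := mul_le_mul_of_nonneg_left h5 (by positivity : 0 ≤ t^3)
      nlinarith
    have h9 := mul_le_mul_of_nonneg_left h4 hc0
    push_cast at h1
    have h10 : ((n:ℝ)+1)*((n:ℝ)+1+1)/2 = c := by rw [hc]; ring
    rw [h10] at h1
    rw [hD]
    nlinarith
  · have i1 : IntegrableOn (fun y : EuclideanSpace ℝ (Fin n) => (⟪y, w⟫ : ℝ)) S :=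
      hcont.continuousOn.integrableOn_compact hS
    have i2 : IntegrableOn (fun y : EuclideanSpace ℝ (Fin n) => (⟪y, w⟫ : ℝ)^2) S :=
      (hcont.pow 2).continuousOn.integrableOn_compact hS
    have i0 : IntegrableOn (fun y : EuclideanSpace ℝ (Fin n) =>
      (1 - ((n:ℝ)+1) * t^2 * q + D * t^3)) S := continuousOn_const.integrableOn_compact hS
    have iid : IntegrableOn (fun y : EuclideanSpace ℝ (Fin n) => y) S :=
      continuousOn_id.integrableOn_compact hS
    have z1 : ∫ y in S, (⟪y, w⟫ : ℝ) = 0 := by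
      have := integral_inner (𝕜 := ℝ) iid w
      rw [hb, inner_zero_right] at this
      rw [← this]
      refine integral_congr_ae (Filter.Eventually.of_forall fun y => ?_)
      exact real_inner_comm _ _
    have i3 : IntegrableOn (fun y : EuclideanSpace ℝ (Fin n) =>
      (1 - ((n:ℝ)+1) * t^2 * q + D * t^3) - ((n+1) * t) * ⟪y, w⟫) S := i0.sub (i1.const_mul _)
    rw [integral_add i3 (i2.const_mul _), integral_sub i0 (i1.const_mul _),
      integral_const_mul, integral_const_mul, z1, setIntegral_const, Measure.real, smul_eq_mul]
    ring

theorem mv_main {n : ℕ} (K : Set (EuclideanSpace ℝ (Fin n)))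
    (hKcomp : IsCompact K) (hKconv : Convex ℝ K)
    (hK0 : (0 : EuclideanSpace ℝ (Fin n)) ∈ interior K)
    (hmin : ∃ ε > 0, ∀ L : Set (EuclideanSpace ℝ (Fin n)),
      IsCompact L → Convex ℝ L → (0 : EuclideanSpace ℝ (Fin n)) ∈ interior L →
      Metric.hausdorffDist K L < ε → vp K ≤ vp L)
    (hbK : bary K = 0) (hbKpolar : bary (polarBody K) = 0) :
    IsCompact (polarBody K) ∧ ∀ v w : EuclideanSpace ℝ (Fin n),
      0 ≤ (n+2)/2 * ((volume K).toReal⁻¹ * ∫ x in K, ⟪x, v⟫^2)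
        + (n+2)/2 * ((volume (polarBody K)).toReal⁻¹ * ∫ x in polarBody K, ⟪x, w⟫^2) - ⟪v, w⟫ := by
  obtain ⟨ε, hε, hmin⟩ := hmin
  obtain ⟨r, hr, hrK⟩ : ∃ r > 0, Metric.closedBall (0 : EuclideanSpace ℝ (Fin n)) r ⊆ K :=
    Metric.nhds_basis_closedBall.mem_iff.1 (mem_interior_iff_mem_nhds.1 hK0)
  obtain ⟨R, hR0, hR⟩ := hKcomp.isBounded.exists_pos_norm_le
  have hpc : IsCompact (polarBody K) := by
    refine Metric.isCompact_of_isClosed_isBounded ?_ ?_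
    · have : polarBody K = ⋂ x ∈ K, {y | (⟪x, y⟫ : ℝ) ≤ 1} := by
        ext y; simp [polarBody]
      rw [this]
      refine isClosed_biInter fun x _ => isClosed_le (by fun_prop) continuous_const
    · refine (Metric.isBounded_closedBall (x := (0 : EuclideanSpace ℝ (Fin n))) (r := 1/r)).subset ?_
      intro y hy
      rw [mem_closedBall_zero_iff]
      rcases eq_or_ne y 0 with h | h
      · rw [h, norm_zero]; positivity
      have hy0 : 0 < ‖y‖ := norm_pos_iff.2 h
      have h1 : (r * ‖y‖⁻¹) • y ∈ K := hrK (by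
        rw [mem_closedBall_zero_iff, norm_smul, Real.norm_eq_abs, abs_of_pos (by positivity)]
        field_simp
        exact le_rfl)
      have h2 := hy _ h1
      rw [real_inner_smul_left, real_inner_self_eq_norm_sq] at h2
      rw [le_div_iff₀ hr]
      field_simp at h2
      linarith
  refine ⟨hpc, fun v w => ?_⟩
  have hκ : 0 < (volume K).toReal := by
    refine ENNReal.toReal_pos ?_ hKcomp.measure_lt_top.ne
    exact (Measure.measure_pos_of_mem_nhds _ (mem_interior_iff_mem_nhds.1 hK0)).ne'
  have hπ : 0 < (volume (polarBody K)).toReal := by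
    refine ENNReal.toReal_pos ?_ hpc.measure_lt_top.ne
    refine (Measure.measure_pos_of_mem_nhds (x := 0) _ (Filter.mem_of_superset
      (Metric.closedBall_mem_nhds _ (by positivity : 0 < 1/R)) ?_)).ne'
    intro y hy x hx
    rw [mem_closedBall_zero_iff] at hy
    refine (real_inner_le_norm x y).trans ?_
    calc ‖x‖ * ‖y‖ ≤ R * (1/R) := by gcongr; exact hR x hx
      _ = 1 := by field_simp
  have hb1 : ∫ x in K, x = 0 := by
    rw [bary, smul_eq_zero] at hbK
    exact hbK.resolve_left (inv_ne_zero hκ.ne')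
  have hb2 : ∫ x in polarBody K, x = 0 := by
    rw [bary, smul_eq_zero] at hbKpolar
    exact hbKpolar.resolve_left (inv_ne_zero hπ.ne')
  obtain ⟨C1, δ1, hδ1, H1⟩ := mv_expand K hKcomp hb1 0 v
  obtain ⟨C2, δ2, hδ2, H2⟩ := mv_expand (polarBody K) hpc hb2 v w
  set κ := (volume K).toReal with hκd
  set π := (volume (polarBody K)).toReal with hπd
  set IK : ℝ := ∫ x in K, ⟪x, v⟫^2
  set IP : ℝ := ∫ x in polarBody K, ⟪x, w⟫^2
  set α : ℝ := (n+1)*(n+2)/2 * IK with hα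
  set β : ℝ := (n+1)*(n+2)/2 * IP - (n+1) * (π * ⟪v, w⟫) with hβ
  have key : ∀ᶠ t in nhdsWithin (0:ℝ) (Set.Ioi 0),
      0 ≤ (κ * β + π * α) + t * (κ * C2 + π * C1 + t * (α * β) + t^2 * (α * C2 + β * C1)
        + t^3 * (C1 * C2)) := by
    have small : ∀ d > 0, ∀ᶠ t in nhdsWithin (0:ℝ) (Set.Ioi 0), t < d := fun d hd =>
      mem_nhdsWithin_of_mem_nhds (Iio_mem_nhds hd)
    have small' : ∀ c ≥ 0, ∀ d > 0, ∀ᶠ t in nhdsWithin (0:ℝ) (Set.Ioi 0), t * c < d := by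
      intro c hc d hd
      filter_upwards [small (d / (c+1)) (by positivity), self_mem_nhdsWithin] with t ht ht0
      rw [lt_div_iff₀ (by positivity)] at ht
      have : (0:ℝ) < t := ht0
      nlinarith
    filter_upwards [self_mem_nhdsWithin, small δ1 hδ1, small δ2 hδ2,
      small' (‖v‖ * r) (by positivity) 1 one_pos, small' ‖w‖ (by positivity) (r/4) (by positivity),
      small' (2 * R * (R * ‖v‖) + ‖w‖) (by positivity) ε hε] with t ht0 ht1 ht2 htv htw htε
    have ht0 : 0 < t := ht0
    obtain ⟨A1, B1⟩ := H1 t ht0 ht1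
    obtain ⟨A2, B2⟩ := H2 t ht0 ht2
    simp only [smul_zero, add_zero, inner_zero_left, mul_zero, sub_zero] at A1 B1
    have A1' : ∀ y ∈ K, 0 < 1 + (⟪y, t • v⟫ : ℝ) := fun y hy => by linarith [A1 y hy]
    have hball : ∀ z, ‖z‖ ≤ r/2 → z ∈ mvP (t • v) '' K := fun z hz =>
      mv_ball K r hr hrK (t • v) (by rw [norm_smul, Real.norm_eq_abs, abs_of_pos ht0]; linarith) z hz
    have hnw : ‖t • w‖ = t * ‖w‖ := by rw [norm_smul, Real.norm_eq_abs, abs_of_pos ht0]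
    have hL := hmin ((fun x => x + t • w) '' (mvP (t • v) '' K)) ?_ ?_ ?_ ?_
    · have e1 : volume ((fun x => x + t • w) '' (mvP (t • v) '' K)) = volume (mvP (t • v) '' K) := by
        simp
      have e2 : (volume (polarBody ((fun x => x + t • w) '' (mvP (t • v) '' K)))).toReal ≤
          (volume ((fun y => mvP (t • w) (y + t • v)) '' polarBody K)).toReal := by
        refine ENNReal.toReal_mono ?_ (measure_mono (mv_polar K (t • v) (t • w) A1' (hball _ ?_)))
        · refine (hpc.image_of_continuousOn ?_).measure_lt_top.ne
          unfold mvP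
          refine ContinuousOn.fun_smul (ContinuousOn.fun_inv₀ (Continuous.continuousOn (by fun_prop)) ?_) (Continuous.continuousOn (by fun_prop))
          intro y hy
          have := A2 y hy
          linarith
        · rw [hnw]; linarith
      have e3 : κ * π ≤ (κ + t^2 * α + C1 * t^3) * (π + t^2 * β + C2 * t^3) := by
        refine hL.trans ?_
        unfold vp
        rw [e1]
        exact mul_le_mul B1 (e2.trans B2) ENNReal.toReal_nonneg (ENNReal.toReal_nonneg.trans B1)
      have e4 : 0 ≤ t^2 * ((κ * β + π * α) + t * (κ * C2 + π * C1 + t * (α * β)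
        + t^2 * (α * C2 + β * C1) + t^3 * (C1 * C2))) := by
        nlinarith
      exact nonneg_of_mul_nonneg_right e4 (by positivity)
    · refine (hKcomp.image_of_continuousOn ?_).image (by fun_prop)
      unfold mvP
      refine ContinuousOn.fun_smul (ContinuousOn.fun_inv₀ (Continuous.continuousOn (by fun_prop)) ?_) (Continuous.continuousOn (by fun_prop))
      intro y hy
      exact (A1' y hy).ne'
    · have := (mv_conv K hKconv (t • v) A1').translate (t • w)
      simpa [add_comm] using this
    · rw [mem_interior_iff_mem_nhds]
      refine Filter.mem_of_superset (Metric.closedBall_mem_nhds _ (by positivity : 0 < r/4)) ?_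
      intro z hz
      rw [mem_closedBall_zero_iff] at hz
      refine ⟨z - t • w, hball _ ?_, by simp⟩
      refine (norm_sub_le _ _).trans ?_
      rw [hnw]; linarith
    · have hd : ∀ x ∈ K, dist x (mvP (t • v) x + t • w) ≤ t * (2 * R * (R * ‖v‖) + ‖w‖) := by
        intro x hx
        have hs := A1 x hx
        have e1 : x - (mvP (t • v) x + t • w)
            = ((1 + ⟪x, t • v⟫)⁻¹ * ⟪x, t • v⟫) • x - t • w := by
          unfold mvP
          rw [← sub_sub]
          congr 1
          have : ((1 + ⟪x, t • v⟫)⁻¹ * ⟪x, t • v⟫ : ℝ) = 1 - (1 + ⟪x, t • v⟫)⁻¹ := by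
            have := (A1' x hx).ne'
            field_simp
            ring
          rw [this, sub_smul, one_smul]
        rw [dist_eq_norm, e1]
        refine (norm_sub_le _ _).trans ?_
        rw [hnw, norm_smul, norm_mul, norm_inv, Real.norm_eq_abs, Real.norm_eq_abs,
          abs_of_pos (A1' x hx)]
        have h1 : (1 + ⟪x, t • v⟫ : ℝ)⁻¹ ≤ 2 := by
          rw [inv_le_comm₀ (A1' x hx) (by norm_num)]; linarith
        have h2 : |(⟪x, t • v⟫ : ℝ)| ≤ R * (t * ‖v‖) := by
          refine (abs_real_inner_le_norm _ _).trans ?_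
          rw [norm_smul, Real.norm_eq_abs, abs_of_pos ht0]
          gcongr
          exact hR x hx
        have h3 : (1 + ⟪x, t • v⟫ : ℝ)⁻¹ * |(⟪x, t • v⟫ : ℝ)| * ‖x‖ ≤ 2 * (R * (t * ‖v‖)) * R := by
          have := A1' x hx
          gcongr
          exact hR x hx
        linarith
      refine (Metric.hausdorffDist_le_of_mem_dist (by positivity) ?_ ?_).trans_lt htε
      · intro x hx
        exact ⟨_, ⟨_, ⟨x, hx, rfl⟩, rfl⟩, hd x hx⟩
      · rintro _ ⟨_, ⟨x, hx, rfl⟩, rfl⟩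
        exact ⟨x, hx, by rw [dist_comm]; exact hd x hx⟩
  have lim : Filter.Tendsto (fun t : ℝ => (κ * β + π * α) + t * (κ * C2 + π * C1 + t * (α * β)
      + t^2 * (α * C2 + β * C1) + t^3 * (C1 * C2))) (nhdsWithin (0:ℝ) (Set.Ioi 0))
      (nhds (κ * β + π * α)) := by
    refine Filter.Tendsto.mono_left ?_ nhdsWithin_le_nhds
    refine Continuous.tendsto' (by fun_prop) _ _ (by simp)
  have fin := ge_of_tendsto lim key
  have : (κ * β + π * α) = (κ * π * (n+1)) * ((n+2)/2 * (κ⁻¹ * IK) + (n+2)/2 * (π⁻¹ * IP) - ⟪v, w⟫) := by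
    rw [hα, hβ]
    field_simp
    ring
  rw [this] at fin
  exact nonneg_of_mul_nonneg_right fin (by positivity)

theorem mv_quad {n : ℕ} (S : Set (EuclideanSpace ℝ (Fin n))) (hS : IsCompact S) (v : Fin n → ℝ) :
    v ⬝ᵥ (covM S).mulVec v = (volume S).toReal⁻¹ * ∫ x in S, ⟪x, WithLp.toLp 2 v⟫^2 := by
  have e : ∀ x : EuclideanSpace ℝ (Fin n), (⟪x, WithLp.toLp 2 v⟫ : ℝ)^2
      = ∑ i, ∑ j, v i * v j * (x i * x j) := by
    intro x
    have : (⟪x, WithLp.toLp 2 v⟫ : ℝ) = ∑ i, v i * x i := by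
      simp [PiLp.inner_apply]
    rw [this, sq, Finset.sum_mul_sum]
    refine Finset.sum_congr rfl fun i _ => Finset.sum_congr rfl fun j _ => by ring
  have hi : ∀ i j, IntegrableOn (fun x : EuclideanSpace ℝ (Fin n) => v i * v j * (x i * x j)) S :=
    fun i j => ContinuousOn.integrableOn_compact hS (by fun_prop)
  simp_rw [e]
  rw [integral_finsetSum _ fun i _ => integrable_finsetSum _ fun j _ => hi i j]
  simp_rw [integral_finsetSum Finset.univ fun j _ => hi _ j, integral_const_mul]
  simp only [dotProduct, Matrix.mulVec, covM, Matrix.of_apply, Finset.mul_sum]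
  refine Finset.sum_congr rfl fun i _ => Finset.sum_congr rfl fun j _ => by ring

theorem mv_herm {n : ℕ} (S : Set (EuclideanSpace ℝ (Fin n))) : (covM S).IsHermitian := by
  ext i j
  simp [covM, mul_comm]

theorem stmt0 {n : ℕ} (hn : 1 ≤ n) (K : Set (EuclideanSpace ℝ (Fin n)))
    (hKcomp : IsCompact K) (hKconv : Convex ℝ K)
    (hK0 : (0 : EuclideanSpace ℝ (Fin n)) ∈ interior K)
    (hmin : ∃ ε > 0, ∀ L : Set (EuclideanSpace ℝ (Fin n)),
      IsCompact L → Convex ℝ L → (0 : EuclideanSpace ℝ (Fin n)) ∈ interior L →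
      Metric.hausdorffDist K L < ε → vp K ≤ vp L)
    (hbK : bary K = 0) (hbKpolar : bary (polarBody K) = 0) :
    (covM (polarBody K) - ((n + 2 : ℝ) ^ 2)⁻¹ • (covM K)⁻¹).PosSemidef := by
  obtain ⟨hpc, H⟩ := mv_main K hKcomp hKconv hK0 hmin hbK hbKpolar
  have hA := mv_herm K
  refine Matrix.PosSemidef.of_dotProduct_mulVec_nonneg ?_ ?_
  · refine (mv_herm _).sub ?_
    have := hA.inv
    rw [Matrix.IsHermitian, Matrix.conjTranspose_smul, this.eq]
    simp
  · intro w
    have hn0 : (0:ℝ) < (n:ℝ) + 2 := by positivity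
    set u : Fin n → ℝ := (covM K)⁻¹.mulVec w with hu
    have h := H (WithLp.toLp 2 (((n:ℝ)+2)⁻¹ • u)) (WithLp.toLp 2 w)
    rw [← mv_quad K hKcomp, ← mv_quad _ hpc] at h
    have e1 : (⟪WithLp.toLp 2 (((n:ℝ)+2)⁻¹ • u), (WithLp.toLp 2 w : EuclideanSpace ℝ (Fin n))⟫ : ℝ)
        = ((n:ℝ)+2)⁻¹ * (w ⬝ᵥ u) := by
      simp [PiLp.inner_apply, dotProduct, Finset.mul_sum, mul_left_comm]
    have e2 : u ⬝ᵥ (covM K).mulVec u = w ⬝ᵥ u := by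
      by_cases hd : IsUnit (covM K).det
      · rw [hu, Matrix.mulVec_mulVec, Matrix.mul_nonsing_inv _ hd, Matrix.one_mulVec,
          dotProduct_comm]
      · rw [hu, Matrix.nonsing_inv_apply_not_isUnit _ hd]
        simp
    rw [e1, Matrix.mulVec_smul, smul_dotProduct, dotProduct_smul, e2] at h
    simp only [smul_eq_mul] at h
    rw [star_trivial, Matrix.sub_mulVec, dotProduct_sub, Matrix.smul_mulVec, dotProduct_smul,
      smul_eq_mul, ← hu]
    set q := w ⬝ᵥ u
    set b := w ⬝ᵥ (covM (polarBody K)).mulVec w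
    have : ((n:ℝ)+2)/2 * (((n:ℝ)+2)⁻¹ * (((n:ℝ)+2)⁻¹ * q)) + ((n:ℝ)+2)/2 * b - ((n:ℝ)+2)⁻¹ * q
      = ((n:ℝ)+2)/2 * (b - (((n:ℝ)+2)^2)⁻¹ * q) := by
      field_simp
      ring
    rw [this] at h
    exact nonneg_of_mul_nonneg_right h (by positivity)
end
end

section
/- Let n ≥ 1 and let K ⊂ ℝⁿ be a convex body containing the origin in its interior. Then the function F_K(x,ξ) = vp((K°+ξ)° + x) is (defined on a neighborhood of (0,0) in ℝⁿ × ℝⁿ and) differentiable at (0,0), with differential d_{(0,0)}F_K(v,η) = −(n+1)·vp(K)·(⟨G_{K°}, v⟩ + ⟨G_K, η⟩) for all (v,η) ∈ ℝⁿ × ℝⁿ. -/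
open MeasureTheory RealInnerProductSpace

noncomputable section

/-- The functional `F_K(x, ξ) = vp((K° + ξ)° + x)`. -/
def FK {n : ℕ} (K : Set (EuclideanSpace ℝ (Fin n)))
    (p : EuclideanSpace ℝ (Fin n) × EuclideanSpace ℝ (Fin n)) : ℝ :=
  vp ((fun y => y + p.1) '' polarBody ((fun y => y + p.2) '' polarBody K))

theorem pb_isClosed {n : ℕ} (A : Set (EuclideanSpace ℝ (Fin n))) : IsClosed (polarBody A) := by
  have : polarBody A = ⋂ x ∈ A, {y | ⟪x, y⟫ ≤ 1} := by
    ext y; simp [polarBody]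
  rw [this]
  exact isClosed_biInter fun x _ => isClosed_le (by fun_prop) continuous_const

theorem pb_convex {n : ℕ} (A : Set (EuclideanSpace ℝ (Fin n))) : Convex ℝ (polarBody A) := by
  intro y hy z hz a b ha hb hab x hx
  rw [inner_add_right, inner_smul_right, inner_smul_right]
  nlinarith [hy x hx, hz x hx]

theorem pb_subset {n : ℕ} (A : Set (EuclideanSpace ℝ (Fin n))) {r : ℝ} (hr : 0 < r)
    (h : Metric.closedBall 0 r ⊆ A) : polarBody A ⊆ Metric.closedBall 0 r⁻¹ := by
  intro y hy
  rw [mem_closedBall_zero_iff]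
  by_cases hy0 : y = 0
  · simp [hy0, hr.le]
  have hn : 0 < ‖y‖ := norm_pos_iff.2 hy0
  have := hy ((r / ‖y‖) • y) (h (by
    rw [mem_closedBall_zero_iff, norm_smul, Real.norm_of_nonneg (by positivity)]
    field_simp; rfl))
  rw [real_inner_smul_left, real_inner_self_eq_norm_sq] at this
  have e : r / ‖y‖ * ‖y‖ ^ 2 = r * ‖y‖ := by field_simp
  rw [e] at this
  rw [← one_div, le_div_iff₀ hr]; linarith

theorem pb_supset {n : ℕ} (A : Set (EuclideanSpace ℝ (Fin n))) {R : ℝ} (hR : 0 < R)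
    (h : A ⊆ Metric.closedBall 0 R) : Metric.closedBall 0 R⁻¹ ⊆ polarBody A := by
  intro y hy x hx
  have h1 := h hx
  rw [mem_closedBall_zero_iff] at h1 hy
  calc ⟪x, y⟫ ≤ ‖x‖ * ‖y‖ := real_inner_le_norm x y
    _ ≤ R * R⁻¹ := by gcongr
    _ = 1 := mul_inv_cancel₀ hR.ne'

theorem pb_bipolar {n : ℕ} (A : Set (EuclideanSpace ℝ (Fin n))) (hc : IsClosed A)
    (hv : Convex ℝ A) (h0 : 0 ∈ A) : polarBody (polarBody A) = A := by
  apply Set.Subset.antisymm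
  · intro y hy
    by_contra hyA
    obtain ⟨f, u, hf, hu⟩ := geometric_hahn_banach_closed_point hv hc hyA
    have hu0 : 0 < u := by simpa using hf 0 h0
    obtain ⟨z, rfl⟩ := (InnerProductSpace.toDual ℝ (EuclideanSpace ℝ (Fin n))).surjective f
    simp only [InnerProductSpace.toDual_apply_apply] at hf hu
    have := hy (u⁻¹ • z) (by
      intro x hx
      rw [real_inner_smul_right, real_inner_comm, inv_mul_le_iff₀ hu0, mul_one]
      exact (hf x hx).le)
    rw [real_inner_smul_left, inv_mul_le_iff₀ hu0, mul_one] at this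
    linarith
  · intro x hx y hy
    rw [real_inner_comm]; exact hy x hx

theorem pb_cov {n : ℕ} (A : Set (EuclideanSpace ℝ (Fin n))) (x : EuclideanSpace ℝ (Fin n))
    (h1 : x ∈ A) (h2 : (-2 : ℝ) • x ∈ A) :
    (volume (polarBody ((fun y => y + x) '' A))).toReal
      = ∫ w in polarBody A, ((1 + ⟪x, w⟫) ^ (n + 1))⁻¹ := by
  have hpos : ∀ w ∈ polarBody A, 0 < 1 + ⟪x, w⟫ := by
    intro w hw
    have := hw _ h2
    rw [real_inner_smul_left] at this
    linarith
  let f : EuclideanSpace ℝ (Fin n) → EuclideanSpace ℝ (Fin n) := fun w => (1 + ⟪x, w⟫)⁻¹ • w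
  let f' : EuclideanSpace ℝ (Fin n) → EuclideanSpace ℝ (Fin n) →L[ℝ] EuclideanSpace ℝ (Fin n) :=
    fun w => (1 + ⟪x, w⟫)⁻¹ • ContinuousLinearMap.id ℝ _ +
      ((-((1 + ⟪x, w⟫) ^ 2)⁻¹) • innerSL ℝ x).smulRight w
  have hf' : ∀ w ∈ polarBody A, HasFDerivWithinAt f (f' w) (polarBody A) w := by
    intro w hw
    apply HasFDerivAt.hasFDerivWithinAt
    have e1 : HasFDerivAt (fun w => 1 + ⟪x, w⟫) (innerSL ℝ x) w :=
      ((innerSL ℝ x).hasFDerivAt (x := w)).const_add 1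
    have e2 := (hasDerivAt_inv (hpos w hw).ne').comp_hasFDerivAt w e1
    exact e2.smul (hasFDerivAt_id w)
  have hinner : ∀ w ∈ polarBody A, 1 - ⟪x, f w⟫ = (1 + ⟪x, w⟫)⁻¹ := by
    intro w hw
    have := hpos w hw
    simp only [f, real_inner_smul_right]
    field_simp; ring
  have hinj : Set.InjOn f (polarBody A) := by
    intro w hw z hz h
    have e : (1 + ⟪x, w⟫)⁻¹ = (1 + ⟪x, z⟫)⁻¹ := by rw [← hinner w hw, ← hinner z hz, h]
    simp only [f] at h
    rw [e] at h
    exact smul_right_injective _ (inv_ne_zero (hpos z hz).ne') h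
  have himg : f '' polarBody A = polarBody ((fun y => y + x) '' A) := by
    apply Set.Subset.antisymm
    · rintro _ ⟨w, hw, rfl⟩ _ ⟨z, hz, rfl⟩
      have := hpos w hw
      have h3 := hw z hz
      simp only [f, real_inner_smul_right, inner_add_left]
      rw [← mul_add, inv_mul_le_iff₀ this]; linarith
    · intro y hy
      have h3 := hy _ ⟨x, h1, rfl⟩
      simp only [inner_add_left] at h3
      have h4 : 0 < 1 - ⟪x, y⟫ := by linarith
      refine ⟨(1 - ⟪x, y⟫)⁻¹ • y, ?_, ?_⟩
      · intro z hz
        have h5 := hy _ ⟨z, hz, rfl⟩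
        simp only [inner_add_left] at h5
        rw [real_inner_smul_right, inv_mul_le_iff₀ h4]; linarith
      · simp only [f, real_inner_smul_right, smul_smul]
        have : (1 + (1 - ⟪x, y⟫)⁻¹ * ⟪x, y⟫)⁻¹ * (1 - ⟪x, y⟫)⁻¹ = 1 := by
          have : 1 + (1 - ⟪x, y⟫)⁻¹ * ⟪x, y⟫ = (1 - ⟪x, y⟫)⁻¹ := by field_simp; ring
          rw [this, inv_inv]; exact mul_inv_cancel₀ h4.ne'
        rw [this, one_smul]
  have hdet : ∀ w ∈ polarBody A, |(f' w).det| = ((1 + ⟪x, w⟫) ^ (n + 1))⁻¹ := by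
    intro w hw
    have hp := hpos w hw
    have e : (f' w : EuclideanSpace ℝ (Fin n) →ₗ[ℝ] EuclideanSpace ℝ (Fin n)) =
        (1 + ⟪x, w⟫)⁻¹ • LinearMap.transvection
          ((-(1 + ⟪x, w⟫)⁻¹) • (innerSL ℝ x : EuclideanSpace ℝ (Fin n) →ₗ[ℝ] ℝ)) w := by
      ext1 z
      simp [f', LinearMap.transvection.apply, smul_smul, sq, mul_assoc]
    rw [ContinuousLinearMap.det, e, LinearMap.det_smul, LinearMap.transvection.det]
    have e2 : (1 + ((-(1 + ⟪x, w⟫)⁻¹) • (innerSL ℝ x : EuclideanSpace ℝ (Fin n) →ₗ[ℝ] ℝ)) w)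
        = (1 + ⟪x, w⟫)⁻¹ := by
      simp; field_simp; ring
    rw [e2, finrank_euclideanSpace_fin, ← pow_succ, inv_pow, abs_of_pos (by positivity)]
  have key := integral_image_eq_integral_abs_det_fderiv_smul volume
    (pb_isClosed A).measurableSet hf' hinj (fun _ => (1 : ℝ))
  rw [himg] at key
  simp only [integral_const, smul_eq_mul, mul_one, MeasurableSet.univ, Measure.real,
    Measure.restrict_apply, Set.univ_inter] at key
  rw [key]
  exact setIntegral_congr_fun (pb_isClosed A).measurableSet hdet

theorem pb_deriv {n : ℕ} (A : Set (EuclideanSpace ℝ (Fin n))) (hA : IsCompact A) :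
    HasFDerivAt (fun x => ∫ w in A, ((1 + ⟪x, w⟫) ^ (n + 1))⁻¹)
      (innerSL ℝ ((-((n : ℝ) + 1)) • ∫ w in A, w)) 0 := by
  obtain ⟨R, hR0, hR⟩ := hA.isBounded.subset_closedBall_lt 0 0
  have hms : MeasurableSet A := hA.measurableSet
  have : IsFiniteMeasure (volume.restrict A) := ⟨by simpa using hA.measure_lt_top⟩
  have hlow : ∀ w ∈ A, ∀ x ∈ Metric.ball (0 : EuclideanSpace ℝ (Fin n)) (2 * R)⁻¹,
      1 / 2 ≤ 1 + ⟪x, w⟫ := by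
    intro w hw x hx
    have h1 := hR hw
    rw [mem_closedBall_zero_iff] at h1
    rw [mem_ball_zero_iff] at hx
    have h2 := neg_le_of_abs_le (abs_real_inner_le_norm x w)
    have h3 : ‖x‖ * ‖w‖ ≤ (2 * R)⁻¹ * R := by gcongr
    have h4 : (2 * R)⁻¹ * R = 1 / 2 := by field_simp
    linarith
  have hid : IntegrableOn (fun w : EuclideanSpace ℝ (Fin n) => w) A :=
    continuous_id.continuousOn.integrableOn_compact hA
  have key := hasFDerivAt_integral_of_dominated_of_fderiv_le (𝕜 := ℝ)
    (μ := volume.restrict A) (x₀ := (0 : EuclideanSpace ℝ (Fin n)))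
    (F := fun x w => ((1 + ⟪x, w⟫) ^ (n + 1))⁻¹)
    (F' := fun x w => (-((n : ℝ) + 1) * (1 + ⟪x, w⟫) ^ n * (((1 + ⟪x, w⟫) ^ (n + 1)) ^ 2)⁻¹) •
      innerSL ℝ w)
    (bound := fun _ => ((n : ℝ) + 1) * (2 ^ n * (((1 / 2) ^ (n + 1)) ^ 2)⁻¹) * R)
    (s := Metric.ball 0 (2 * R)⁻¹)
    (Metric.ball_mem_nhds _ (by positivity)) ?_ ?_ ?_ ?_ ?_ ?_
  · refine key.congr_fderiv ?_
    simp only [inner_zero_left, add_zero, one_pow, inv_one, mul_one]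
    rw [integral_smul, map_smul]
    congr 1
    exact ContinuousLinearMap.integral_comp_comm (innerSL ℝ) hid
  · exact Filter.Eventually.of_forall fun x => by
      apply Measurable.aestronglyMeasurable
      fun_prop
  · simp
  · simp only [inner_zero_left, add_zero, one_pow, inv_one, mul_one]
    exact (((innerSL ℝ).continuous).const_smul (-((n : ℝ) + 1))).aestronglyMeasurable
  · refine (ae_restrict_iff' hms).2 (Filter.Eventually.of_forall fun w hw x hx => ?_)
    have h1 := hlow w hw x hx
    have h2 : 1 + ⟪x, w⟫ ≤ 2 := by
      have h1 := hR hw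
      rw [mem_closedBall_zero_iff] at h1
      rw [mem_ball_zero_iff] at hx
      have h2 := real_inner_le_norm x w
      have h3 : ‖x‖ * ‖w‖ ≤ (2 * R)⁻¹ * R := by gcongr
      have h4 : (2 * R)⁻¹ * R = 1 / 2 := by field_simp
      linarith
    have hp : 0 < 1 + ⟪x, w⟫ := by linarith
    have hw' := hR hw
    rw [mem_closedBall_zero_iff] at hw'
    rw [norm_smul, innerSL_apply_norm, norm_mul, norm_mul, norm_neg,
      Real.norm_of_nonneg (by positivity : (0 : ℝ) ≤ (n : ℝ) + 1),
      Real.norm_of_nonneg (by positivity : (0 : ℝ) ≤ (1 + ⟪x, w⟫) ^ n),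
      Real.norm_of_nonneg (by positivity : (0 : ℝ) ≤ (((1 + ⟪x, w⟫) ^ (n + 1)) ^ 2)⁻¹), mul_assoc ((n : ℝ) + 1)]
    gcongr
  · exact integrable_const _
  · refine (ae_restrict_iff' hms).2 (Filter.Eventually.of_forall fun w hw x hx => ?_)
    have hp : 0 < 1 + ⟪x, w⟫ := by linarith [hlow w hw x hx]
    have e1 : HasFDerivAt (fun x => 1 + ⟪x, w⟫) (innerSL ℝ w) x := by
      have := ((innerSL ℝ w).hasFDerivAt (x := x)).const_add 1
      simpa [real_inner_comm] using this
    have e2 := (hasDerivAt_inv (pow_pos hp (n + 1)).ne').comp_hasFDerivAt x (e1.pow (n + 1))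
    refine HasFDerivAt.congr_fderiv e2 ?_
    rw [smul_smul]
    congr 1
    simp
    ring

theorem FK_eq {n : ℕ} (K : Set (EuclideanSpace ℝ (Fin n)))
    (hKcomp : IsCompact K) (hKconv : Convex ℝ K)
    (hK0 : (0 : EuclideanSpace ℝ (Fin n)) ∈ interior K) :
    ∀ᶠ p : EuclideanSpace ℝ (Fin n) × EuclideanSpace ℝ (Fin n) in nhds (0, 0),
      FK K p = (∫ w in K, ((1 + ⟪p.2, w⟫) ^ (n + 1))⁻¹) *
        (((1 + ⟪p.1, p.2⟫)⁻¹) ^ (n + 1) *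
          ∫ w in polarBody K, ((1 + ⟪(1 + ⟪p.1, p.2⟫)⁻¹ • p.1, w⟫) ^ (n + 1))⁻¹) := by
  obtain ⟨R, hR0, hR⟩ := hKcomp.isBounded.subset_closedBall_lt 0 0
  obtain ⟨r, hr0, hr⟩ := Metric.nhds_basis_closedBall.mem_iff.1 (mem_interior_iff_mem_nhds.1 hK0)
  have hP1 := pb_subset K hr0 hr
  have hP2 := pb_supset K hR0 hR
  have hbi := pb_bipolar K hKcomp.isClosed hKconv (interior_subset hK0)
  set ρ : ℝ := r⁻¹ + 1 with hρ
  have hρ0 : 0 < ρ := by positivity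
  have E1 : ∀ᶠ p : EuclideanSpace ℝ (Fin n) × EuclideanSpace ℝ (Fin n) in nhds (0, 0),
      2 * ‖p.1‖ < ρ⁻¹ := by
    refine (by fun_prop : Continuous fun p : EuclideanSpace ℝ (Fin n) × EuclideanSpace ℝ (Fin n) => 2 * ‖p.1‖).continuousAt.eventually_lt continuousAt_const ?_
    simpa using hρ0
  have E2 : ∀ᶠ p : EuclideanSpace ℝ (Fin n) × EuclideanSpace ℝ (Fin n) in nhds (0, 0),
      2 * ‖p.2‖ < R⁻¹ := by
    refine (by fun_prop : Continuous fun p : EuclideanSpace ℝ (Fin n) × EuclideanSpace ℝ (Fin n) => 2 * ‖p.2‖).continuousAt.eventually_lt continuousAt_const ?_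
    simpa using hR0
  have E3 : ∀ᶠ p : EuclideanSpace ℝ (Fin n) × EuclideanSpace ℝ (Fin n) in nhds (0, 0),
      ‖p.2‖ < 1 := by
    refine (by fun_prop : Continuous fun p : EuclideanSpace ℝ (Fin n) × EuclideanSpace ℝ (Fin n) => ‖p.2‖).continuousAt.eventually_lt continuousAt_const ?_
    simp
  have E4 : ∀ᶠ p : EuclideanSpace ℝ (Fin n) × EuclideanSpace ℝ (Fin n) in nhds (0, 0),
      0 < 1 + ⟪p.1, p.2⟫ := by
    refine continuousAt_const.eventually_lt (by fun_prop : Continuous fun p : EuclideanSpace ℝ (Fin n) × EuclideanSpace ℝ (Fin n) => 1 + ⟪p.1, p.2⟫).continuousAt ?_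
    simp
  filter_upwards [E1, E2, E3, E4] with p h1 h2 h3 h4
  obtain ⟨x, ξ⟩ := p
  simp only at h1 h2 h3 h4 ⊢
  have c1 := pb_cov (polarBody K) ξ
    (hP2 (by rw [mem_closedBall_zero_iff]; linarith [norm_nonneg ξ]))
    (hP2 (by rw [mem_closedBall_zero_iff, norm_smul]; simpa using h2.le))
  rw [hbi] at c1
  set M := (fun y => y + ξ) '' polarBody K with hM
  have hM1 : M ⊆ Metric.closedBall 0 ρ := by
    rintro _ ⟨y, hy, rfl⟩
    have := hP1 hy
    rw [mem_closedBall_zero_iff] at this ⊢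
    linarith [norm_add_le y ξ]
  have hM2 := pb_supset M hρ0 hM1
  have c2 := pb_cov (polarBody M) x
    (hM2 (by rw [mem_closedBall_zero_iff]; linarith [norm_nonneg x]))
    (hM2 (by rw [mem_closedBall_zero_iff, norm_smul]; simpa using h1.le))
  have hMc : IsClosed M := (Homeomorph.addRight ξ).isClosedMap _ (pb_isClosed K)
  have hMv : Convex ℝ M := by
    have := (pb_convex K).translate ξ
    simpa [hM, add_comm] using this
  have hM0 : (0 : EuclideanSpace ℝ (Fin n)) ∈ M :=
    ⟨-ξ, hP2 (by rw [mem_closedBall_zero_iff, norm_neg]; linarith [norm_nonneg ξ]), by simp⟩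
  rw [pb_bipolar M hMc hMv hM0] at c2
  have c3 : ∫ w in M, ((1 + ⟪x, w⟫) ^ (n + 1))⁻¹ =
      ∫ w in polarBody K, ((1 + ⟪x, w + ξ⟫) ^ (n + 1))⁻¹ :=
    (measurePreserving_add_right volume ξ).setIntegral_image_emb
      (measurableEmbedding_addRight ξ) _ _
  unfold FK vp
  simp only
  rw [← hM, c2, c3]
  congr 1
  · rw [← c1]
    congr 1
    exact measure_preimage_add_right volume (-x) (polarBody M) ▸ by simp
  · rw [← integral_const_mul]
    congr 1
    ext w
    rw [← inv_pow, ← inv_pow, ← mul_pow, ← mul_inv, real_inner_smul_left, inner_add_right]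
    congr 2
    field_simp
    ring

theorem stmt1 {n : ℕ} (hn : 1 ≤ n) (K : Set (EuclideanSpace ℝ (Fin n)))
    (hKcomp : IsCompact K) (hKconv : Convex ℝ K)
    (hK0 : (0 : EuclideanSpace ℝ (Fin n)) ∈ interior K) :
    ∃ L : EuclideanSpace ℝ (Fin n) × EuclideanSpace ℝ (Fin n) →L[ℝ] ℝ,
      HasFDerivAt (FK K) L (0, 0) ∧
      ∀ v η : EuclideanSpace ℝ (Fin n),
        L (v, η) = -((n : ℝ) + 1) * vp K * (⟪bary (polarBody K), v⟫ + ⟪bary K, η⟫) := by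
  have d1 := pb_deriv K hKcomp
  have hbd : IsCompact (polarBody K) := by
    obtain ⟨r, hr0, hr⟩ := Metric.nhds_basis_closedBall.mem_iff.1 (mem_interior_iff_mem_nhds.1 hK0)
    exact (isCompact_closedBall _ _).of_isClosed_subset (pb_isClosed K) (pb_subset K hr0 hr)
  have hpos : ∀ A : Set (EuclideanSpace ℝ (Fin n)), IsCompact A →
      (0 : EuclideanSpace ℝ (Fin n)) ∈ interior A → (volume A).toReal ≠ 0 := by
    intro A hA h0
    exact (ENNReal.toReal_pos (Measure.measure_pos_of_mem_nhds volume (mem_interior_iff_mem_nhds.1 h0)).ne'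
      hA.measure_lt_top.ne).ne'
  have hV1 := hpos K hKcomp hK0
  have hV2 := hpos (polarBody K) hbd (by
    obtain ⟨R, hR0, hR⟩ := hKcomp.isBounded.subset_closedBall_lt 0 0
    exact mem_interior_iff_mem_nhds.2 (Filter.mem_of_superset
      (Metric.closedBall_mem_nhds _ (by positivity)) (pb_supset K hR0 hR)))
  have d2 := pb_deriv (polarBody K) hbd
  have hc : HasFDerivAt (fun p : EuclideanSpace ℝ (Fin n) × EuclideanSpace ℝ (Fin n) => (1 + ⟪p.1, p.2⟫)⁻¹) (0 : EuclideanSpace ℝ (Fin n) × EuclideanSpace ℝ (Fin n) →L[ℝ] ℝ) (0, 0) := by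
    have e1 := ((hasFDerivAt_fst (𝕜 := ℝ) (p := ((0, 0) : EuclideanSpace ℝ (Fin n) × EuclideanSpace ℝ (Fin n)))).inner ℝ
      (hasFDerivAt_snd (𝕜 := ℝ) (p := ((0, 0) : EuclideanSpace ℝ (Fin n) × EuclideanSpace ℝ (Fin n))))).const_add 1
    have e2 := (hasDerivAt_inv (x := 1 + ⟪((0, 0) : EuclideanSpace ℝ (Fin n) × EuclideanSpace ℝ (Fin n)).1, ((0, 0) : EuclideanSpace ℝ (Fin n) × EuclideanSpace ℝ (Fin n)).2⟫)
      (by simp)).comp_hasFDerivAt (f := fun p : EuclideanSpace ℝ (Fin n) × EuclideanSpace ℝ (Fin n) => 1 + ⟪p.1, p.2⟫) (0, 0) e1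
    refine HasFDerivAt.congr_fderiv e2 ?_
    ext z <;> simp
  have hu : HasFDerivAt (fun p : EuclideanSpace ℝ (Fin n) × EuclideanSpace ℝ (Fin n) => (1 + ⟪p.1, p.2⟫)⁻¹ • p.1)
      (ContinuousLinearMap.fst ℝ (EuclideanSpace ℝ (Fin n)) (EuclideanSpace ℝ (Fin n))) (0, 0) := by
    have := hc.smul (hasFDerivAt_fst (𝕜 := ℝ) (p := ((0, 0) : EuclideanSpace ℝ (Fin n) × EuclideanSpace ℝ (Fin n))))
    refine HasFDerivAt.congr_fderiv this ?_
    ext z <;> simp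
  have g1 := HasFDerivAt.comp (𝕜 := ℝ) ((0, 0) : EuclideanSpace ℝ (Fin n) × EuclideanSpace ℝ (Fin n)) (f := fun p : EuclideanSpace ℝ (Fin n) × EuclideanSpace ℝ (Fin n) => p.2) d1
    (hasFDerivAt_snd (𝕜 := ℝ) (p := ((0, 0) : EuclideanSpace ℝ (Fin n) × EuclideanSpace ℝ (Fin n))))
  have d2' : HasFDerivAt (fun x => ∫ w in polarBody K, ((1 + ⟪x, w⟫) ^ (n + 1))⁻¹)
      (innerSL ℝ ((-((n : ℝ) + 1)) • ∫ w in polarBody K, w))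
      ((fun p : EuclideanSpace ℝ (Fin n) × EuclideanSpace ℝ (Fin n) => (1 + ⟪p.1, p.2⟫)⁻¹ • p.1) (0, 0)) := by simpa using d2
  have g2 := d2'.comp (f := fun p : EuclideanSpace ℝ (Fin n) × EuclideanSpace ℝ (Fin n) => (1 + ⟪p.1, p.2⟫)⁻¹ • p.1) (0, 0) hu
  have g := g1.mul ((hc.pow (n + 1)).mul g2)
  refine ⟨_, g.congr_of_eventuallyEq (FK_eq K hKcomp hKconv hK0), ?_⟩
  intro v η
  simp [bary, vp, real_inner_smul_left, Measure.real]
  field_simp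
end
end

section
/- Let n ≥ 1 and let K ⊂ ℝⁿ be a convex body containing the origin in its interior. Then the origin (0,0) is a critical point of the function F_K(x,ξ) = vp((K°+ξ)° + x) (i.e., the differential of F_K at (0,0) vanishes) if and only if G_K = 0 and G_{K°} = 0. -/
open MeasureTheory RealInnerProductSpace

noncomputable section

abbrev EE (n : ℕ) := EuclideanSpace ℝ (Fin n)

theorem isClosed_polarBody {n : ℕ} (M : Set (EE n)) : IsClosed (polarBody M) := by
  have : polarBody M = ⋂ x ∈ M, {y : EE n | ⟪x, y⟫ ≤ 1} := by
    ext y; simp [polarBody]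
  rw [this]
  refine isClosed_biInter fun x _ => isClosed_le ?_ continuous_const
  fun_prop

theorem convex_polarBody {n : ℕ} (M : Set (EE n)) : Convex ℝ (polarBody M) := by
  intro y hy z hz a b ha hb hab x hx
  have h1 := hy x hx
  have h2 := hz x hx
  rw [inner_add_right, inner_smul_right, inner_smul_right]
  nlinarith

theorem zero_mem_interior_polarBody {n : ℕ} (M : Set (EE n)) (R : ℝ) (hR : 0 < R)
    (hM : ∀ x ∈ M, ‖x‖ ≤ R) : (0 : EE n) ∈ interior (polarBody M) := by
  rw [mem_interior_iff_mem_nhds]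
  refine Filter.mem_of_superset (Metric.ball_mem_nhds 0 (inv_pos.2 hR)) ?_
  intro y hy x hx
  rw [mem_ball_zero_iff] at hy
  calc ⟪x, y⟫ ≤ ‖x‖ * ‖y‖ := real_inner_le_norm x y
    _ ≤ R * R⁻¹ := by
      have := hM x hx
      gcongr
    _ = 1 := mul_inv_cancel₀ hR.ne'

theorem polarBody_bounded {n : ℕ} (M : Set (EE n)) (hM : (0 : EE n) ∈ interior M) :
    ∃ R > 0, ∀ y ∈ polarBody M, ‖y‖ ≤ R := by
  rw [mem_interior_iff_mem_nhds, Metric.mem_nhds_iff] at hM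
  obtain ⟨r, hr, hb⟩ := hM
  refine ⟨2 / r, by positivity, fun y hy => ?_⟩
  by_cases h0 : y = 0
  · subst h0; simp; positivity
  have hy0 : 0 < ‖y‖ := norm_pos_iff.2 h0
  have hm : (r / 2 / ‖y‖) • y ∈ M := by
    apply hb
    rw [mem_ball_zero_iff, norm_smul, Real.norm_of_nonneg (by positivity)]
    field_simp
    linarith
  have := hy _ hm
  rw [real_inner_smul_left, real_inner_self_eq_norm_sq] at this
  field_simp at this
  rw [le_div_iff₀ hr]
  nlinarith

theorem bipolar {n : ℕ} (M : Set (EE n)) (hc : Convex ℝ M) (hcl : IsClosed M)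
    (h0 : (0 : EE n) ∈ M) : polarBody (polarBody M) = M := by
  ext x
  constructor
  · intro hx
    by_contra hxM
    obtain ⟨f, u, hf, hu⟩ := geometric_hahn_banach_closed_point hc hcl hxM
    have hu0 : 0 < u := by simpa using hf 0 h0
    set w := (InnerProductSpace.toDual ℝ (EE n)).symm f with hw
    have hwf : ∀ z, ⟪w, z⟫ = f z := fun z => by
      rw [hw, InnerProductSpace.toDual_symm_apply]
    have hmem : u⁻¹ • w ∈ polarBody M := by
      intro z hz
      rw [inner_smul_right, real_inner_comm, hwf]
      have := hf z hz
      rw [inv_mul_le_iff₀ hu0]; linarith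
    have := hx _ hmem
    rw [real_inner_smul_left, hwf, inv_mul_le_iff₀ hu0] at this
    linarith
  · intro hx y hy
    rw [real_inner_comm]
    exact hy x hx

theorem polar_shift {n : ℕ} (M : Set (EE n)) (hM : (0 : EE n) ∈ interior M) (x : EE n)
    (hx : ∀ z ∈ polarBody M, 0 < 1 + ⟪x, z⟫) :
    polarBody ((fun y => y + x) '' M) = (fun z => (1 + ⟪x, z⟫)⁻¹ • z) '' polarBody M := by
  ext y
  constructor
  · intro hy
    have hy' : ∀ m ∈ M, ⟪m, y⟫ + ⟪x, y⟫ ≤ 1 := fun m hm => by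
      have := hy _ ⟨m, hm, rfl⟩
      simpa [inner_add_left] using this
    have hpos : 0 < 1 - ⟪x, y⟫ := by
      by_contra hneg
      have hle : ∀ m ∈ M, ⟪m, y⟫ ≤ 0 := fun m hm => by
        have := hy' m hm; linarith
      have hy0 : y = 0 := by
        by_contra hy0
        obtain ⟨R, hR, hb⟩ := polarBody_bounded M hM
        have hk : ((2 * R / ‖y‖) • y) ∈ polarBody M := by
          intro m hm
          rw [inner_smul_right]
          have := hle m hm
          have h2 : 0 ≤ 2 * R / ‖y‖ := by positivity
          nlinarith
        have := hb _ hk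
        have hyp : 0 < ‖y‖ := norm_pos_iff.2 hy0
        rw [norm_smul, Real.norm_of_nonneg (by positivity), div_mul_cancel₀ _ hyp.ne'] at this
        linarith
      subst hy0
      simp at hneg
    refine ⟨(1 - ⟪x, y⟫)⁻¹ • y, ?_, ?_⟩
    · intro m hm
      rw [inner_smul_right, inv_mul_le_iff₀ hpos]
      have := hy' m hm
      linarith
    · simp only [inner_smul_right, smul_smul]
      have : (1 + (1 - ⟪x, y⟫)⁻¹ * ⟪x, y⟫)⁻¹ * (1 - ⟪x, y⟫)⁻¹ = 1 := by
        have h1 : (1 + (1 - ⟪x, y⟫)⁻¹ * ⟪x, y⟫) = (1 - ⟪x, y⟫)⁻¹ := by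
          field_simp
          try ring
        rw [h1, inv_inv, mul_inv_cancel₀ hpos.ne']
      rw [this, one_smul]
  · rintro ⟨z, hz, rfl⟩ w ⟨m, hm, rfl⟩
    have hp := hx z hz
    have := hz m hm
    simp only [inner_smul_right, inner_add_left]
    rw [inv_mul_le_iff₀ hp]
    linarith

theorem volume_polar_shift {n : ℕ} (M : Set (EE n)) (hM : (0 : EE n) ∈ interior M) (x : EE n)
    (hx : ∀ z ∈ polarBody M, 0 < 1 + ⟪x, z⟫) :
    (volume (polarBody ((fun y => y + x) '' M))).toReal
      = ∫ z in polarBody M, ((1 + ⟪x, z⟫) ^ (n + 1))⁻¹ := by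
  rw [polar_shift M hM x hx]
  change volume.real _ = _
  rw [← setIntegral_one_eq_measureReal]
  let f' : EE n → (EE n →L[ℝ] EE n) := fun z =>
    (1 + ⟪x, z⟫)⁻¹ • ContinuousLinearMap.id ℝ (EE n) +
      ((-((1 + ⟪x, z⟫) ^ 2)⁻¹) • (innerSL ℝ x)).smulRight z
  have hmeas := (isClosed_polarBody M).measurableSet
  rw [integral_image_eq_integral_abs_det_fderiv_smul (f' := f') volume hmeas]
  · refine setIntegral_congr_fun hmeas fun z hz => ?_
    have hp := hx z hz
    have hdet : (f' z).det = ((1 + ⟪x, z⟫) ^ (n + 1))⁻¹ := by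
      have : ((f' z : EE n →L[ℝ] EE n) : EE n →ₗ[ℝ] EE n) = (1 + ⟪x, z⟫)⁻¹ •
          LinearMap.transvection (innerSL ℝ x : EE n →ₗ[ℝ] ℝ) (-(1 + ⟪x, z⟫)⁻¹ • z) := by
        ext1 w
        simp only [f', LinearMap.smul_apply, LinearMap.transvection.apply]
        simp [smul_smul, smul_add]
        congr 1
        field_simp
      rw [ContinuousLinearMap.det, this, LinearMap.det_smul, LinearMap.transvection.det]
      simp only [finrank_euclideanSpace, Fintype.card_fin]
      have h2 : 1 + (innerSL ℝ x : EE n →ₗ[ℝ] ℝ) (-(1 + ⟪x, z⟫)⁻¹ • z) = (1 + ⟪x, z⟫)⁻¹ := by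
        simp [inner_smul_right]
        field_simp
        ring
      rw [h2, inv_pow, pow_succ, mul_inv]
    simp only [hdet, smul_eq_mul, mul_one]
    rw [abs_of_pos (by positivity)]
  · intro z hz
    have hp := hx z hz
    apply HasFDerivAt.hasFDerivWithinAt
    have h1 : HasFDerivAt (fun z : EE n => 1 + ⟪x, z⟫) (innerSL ℝ x) z := by
      simpa using ((innerSL ℝ x).hasFDerivAt (x := z)).const_add 1
    have h2 : HasFDerivAt (fun z : EE n => (1 + ⟪x, z⟫)⁻¹)
        ((-((1 + ⟪x, z⟫) ^ 2)⁻¹) • (innerSL ℝ x)) z :=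
      (hasDerivAt_inv hp.ne').comp_hasFDerivAt z h1
    exact h2.smul (hasFDerivAt_id z)
  · intro z hz w hw h
    have hp := hx z hz
    have hq := hx w hw
    simp only at h
    have h3 := congrArg (fun v => ⟪x, v⟫) h
    simp only [inner_smul_right] at h3
    have h4 : ⟪x, z⟫ = ⟪x, w⟫ := by
      field_simp at h3
      linarith
    rw [h4] at h
    exact smul_right_injective _ (inv_pos.2 hq).ne' h

theorem hasFDerivAt_int {n : ℕ} (S : Set (EE n)) (hS : IsCompact S) :
    HasFDerivAt (fun p : EE n × EE n => ∫ z in S, ((1 + ⟪p.1, z + p.2⟫) ^ (n + 1))⁻¹)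
      ((-((n : ℝ) + 1)) • (innerSL ℝ (∫ z in S, z)).comp (ContinuousLinearMap.fst ℝ (EE n) (EE n)))
      (0, 0) := by
  obtain ⟨R, hR, hb⟩ : ∃ R > 0, ∀ z ∈ S, ‖z‖ ≤ R := hS.isBounded.exists_pos_norm_le
  have hphi : HasDerivAt (fun t : ℝ => ((1 + t) ^ (n + 1))⁻¹) (-((n : ℝ) + 1)) 0 := by
    have h1 : HasDerivAt (fun t : ℝ => (1 + t) ^ (n + 1)) ((n : ℝ) + 1) 0 := by
      have := ((hasDerivAt_id (0 : ℝ)).const_add 1).pow (n + 1)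
      have h2 : HasDerivAt (fun t : ℝ => (1 + t) ^ (n + 1)) _ 0 := this
      refine h2.congr_deriv ?_
      simp
    have h3 : HasDerivAt (fun t : ℝ => ((1 + t) ^ (n + 1))⁻¹) _ 0 := h1.inv (by simp)
    refine h3.congr_deriv ?_
    simp
  have hint : Integrable (fun z : EE n => z) (volume.restrict S) :=
    continuousOn_id.integrableOn_compact hS
  rw [hasFDerivAt_iff_isLittleO_nhds_zero, Asymptotics.isLittleO_iff]
  intro c hc
  rw [hasDerivAt_iff_isLittleO_nhds_zero, Asymptotics.isLittleO_iff] at hphi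
  set V := volume.real S with hV
  have hV0 : 0 ≤ V := measureReal_nonneg
  set e : ℝ := c / (2 * (V + 1) * (R + 1)) with he
  have he0 : 0 < e := by positivity
  have hev := hphi he0
  rw [Metric.eventually_nhds_iff] at hev
  obtain ⟨d, hd, hev⟩ := hev
  set r : ℝ := min 1 (min (d / (R + 1)) (min (1 / (2 * (R + 1))) (c / (2 * (V + 1) * (n + 1))))) with hr
  have hr0 : 0 < r := by positivity
  filter_upwards [Metric.ball_mem_nhds (0 : EE n × EE n) hr0] with p hp
  rw [mem_ball_zero_iff] at hp
  have hp1 : ‖p‖ < 1 := lt_of_lt_of_le hp (min_le_left _ _)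
  have hp2 : ‖p‖ < d / (R + 1) := lt_of_lt_of_le hp ((min_le_right _ _).trans (min_le_left _ _))
  have hp3 : ‖p‖ < 1 / (2 * (R + 1)) := lt_of_lt_of_le hp
    ((min_le_right _ _).trans ((min_le_right _ _).trans (min_le_left _ _)))
  have hp4 : ‖p‖ < c / (2 * (V + 1) * (n + 1)) := lt_of_lt_of_le hp
    ((min_le_right _ _).trans ((min_le_right _ _).trans (min_le_right _ _)))
  rw [lt_div_iff₀ (by positivity)] at hp2 hp3 hp4
  have hn1 : ‖p.1‖ ≤ ‖p‖ := norm_fst_le p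
  have hn2 : ‖p.2‖ ≤ ‖p‖ := norm_snd_le p
  have ht : ∀ z ∈ S, |⟪p.1, z + p.2⟫| ≤ ‖p‖ * (R + 1) := fun z hz => by
    calc |⟪p.1, z + p.2⟫| ≤ ‖p.1‖ * ‖z + p.2‖ := abs_real_inner_le_norm _ _
      _ ≤ ‖p‖ * (R + 1) := by
        have := norm_add_le z p.2
        have := hb z hz
        gcongr
        linarith
  have hcont : ContinuousOn (fun z : EE n => ((1 + ⟪p.1, z + p.2⟫) ^ (n + 1))⁻¹) S := by
    apply ContinuousOn.inv₀
    · fun_prop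
    · intro z hz
      have := (abs_le.1 (ht z hz)).1
      have : 0 < 1 + ⟪p.1, z + p.2⟫ := by linarith
      positivity
  have hi1 := hcont.integrableOn_compact (μ := volume) hS
  have hi2 : IntegrableOn (fun _ : EE n => (1 : ℝ)) S volume :=
    continuousOn_const.integrableOn_compact hS
  have hi3 : IntegrableOn (fun z : EE n => (-((n : ℝ) + 1)) * ⟪p.1, z⟫) S volume := by
    refine ContinuousOn.integrableOn_compact hS (Continuous.continuousOn ?_)
    fun_prop
  have key : (∫ z in S, ((1 + ⟪((0 : EE n), (0 : EE n)).1 + p.1, z + (((0 : EE n), (0 : EE n)).2 + p.2)⟫) ^ (n + 1))⁻¹)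
      - (∫ z in S, ((1 + ⟪((0 : EE n), (0 : EE n)).1, z + ((0 : EE n), (0 : EE n)).2⟫) ^ (n + 1))⁻¹)
      - ((-((n : ℝ) + 1)) • (innerSL ℝ (∫ z in S, z)).comp (ContinuousLinearMap.fst ℝ (EE n) (EE n))) p
      = ∫ z in S, (((1 + ⟪p.1, z + p.2⟫) ^ (n + 1))⁻¹ - 1 - (-((n : ℝ) + 1)) * ⟪p.1, z⟫) := by
    have hi12 : IntegrableOn (fun z : EE n => ((1 + ⟪p.1, z + p.2⟫) ^ (n + 1))⁻¹ - 1) S volume :=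
      hi1.sub hi2
    rw [integral_sub hi12 hi3, integral_sub hi1 hi2, integral_const_mul,
      integral_inner hint]
    simp [real_inner_comm]
  have bound : ∀ z ∈ S, ‖(((1 + ⟪p.1, z + p.2⟫) ^ (n + 1))⁻¹ - 1 - (-((n : ℝ) + 1)) * ⟪p.1, z⟫)‖
      ≤ c / (V + 1) * ‖p‖ := fun z hz => by
    have h1 := hev (y := ⟪p.1, z + p.2⟫) (by
      rw [Real.dist_eq, sub_zero]; exact (ht z hz).trans_lt hp2)
    simp only [zero_add, add_zero, one_pow, inv_one, smul_eq_mul, Real.norm_eq_abs] at h1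
    have h2 : |⟪p.1, p.2⟫| ≤ ‖p‖ * ‖p‖ :=
      (abs_real_inner_le_norm _ _).trans (by gcongr)
    have h3 : (((1 + ⟪p.1, z + p.2⟫) ^ (n + 1))⁻¹ - 1 - (-((n : ℝ) + 1)) * ⟪p.1, z⟫)
        = (((1 + ⟪p.1, z + p.2⟫) ^ (n + 1))⁻¹ - 1 - ⟪p.1, z + p.2⟫ * (-((n : ℝ) + 1)))
          + (-((n : ℝ) + 1)) * ⟪p.1, p.2⟫ := by
      rw [inner_add_right (𝕜 := ℝ) p.1 z p.2]; ring
    rw [h3, Real.norm_eq_abs]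
    refine (abs_add_le _ _).trans ?_
    have h4 : |(-((n : ℝ) + 1)) * ⟪p.1, p.2⟫| ≤ c / (2 * (V + 1)) * ‖p‖ := by
      rw [abs_mul, abs_neg, abs_of_pos (by positivity : (0 : ℝ) < n + 1)]
      have h5 : ((n : ℝ) + 1) * ‖p‖ ≤ c / (2 * (V + 1)) := by
        rw [le_div_iff₀ (by positivity)]; linarith
      calc ((n : ℝ) + 1) * |⟪p.1, p.2⟫| ≤ ((n : ℝ) + 1) * (‖p‖ * ‖p‖) := by gcongr
        _ = (((n : ℝ) + 1) * ‖p‖) * ‖p‖ := by ring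
        _ ≤ _ := by gcongr
    have h6 : e * |⟪p.1, z + p.2⟫| ≤ c / (2 * (V + 1)) * ‖p‖ := by
      calc e * |⟪p.1, z + p.2⟫| ≤ e * (‖p‖ * (R + 1)) := by
            have := ht z hz
            gcongr
        _ = _ := by rw [he]; field_simp
    calc _ ≤ c / (2 * (V + 1)) * ‖p‖ + c / (2 * (V + 1)) * ‖p‖ := add_le_add (h1.trans h6) h4
      _ = _ := by field_simp; ring
  have fin := norm_setIntegral_le_of_norm_le_const (μ := volume) hS.measure_lt_top bound
  rw [← key] at fin
  refine fin.trans ?_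
  calc c / (V + 1) * ‖p‖ * V = c * ‖p‖ * (V / (V + 1)) := by field_simp
    _ ≤ c * ‖p‖ * 1 := by
      gcongr
      rw [div_le_one (by positivity)]; linarith
    _ = _ := mul_one _

theorem FK_eventually {n : ℕ} (K : Set (EE n))
    (hKcomp : IsCompact K) (hKconv : Convex ℝ K) (hK0 : (0 : EE n) ∈ interior K) :
    FK K =ᶠ[nhds (0, 0)] fun p : EE n × EE n =>
      (∫ z in K, ((1 + ⟪p.2, z + 0⟫) ^ (n + 1))⁻¹) *
      (∫ z in polarBody K, ((1 + ⟪p.1, z + p.2⟫) ^ (n + 1))⁻¹) := by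
  obtain ⟨R, hR, hb⟩ : ∃ R > 0, ∀ z ∈ K, ‖z‖ ≤ R := hKcomp.isBounded.exists_pos_norm_le
  obtain ⟨R', hR', hb'⟩ := polarBody_bounded K hK0
  have hLint := zero_mem_interior_polarBody K R hR hb
  have hbip : polarBody (polarBody K) = K :=
    bipolar K hKconv hKcomp.isClosed (interior_subset hK0)
  have hmem : {q : EE n | -q ∈ polarBody K} ∈ nhds (0 : EE n) := by
    have : Filter.Tendsto (fun q : EE n => -q) (nhds 0) (nhds 0) := by
      simpa using (continuous_neg (G := EE n)).tendsto 0
    exact this (mem_interior_iff_mem_nhds.1 hLint)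
  have hmem2 : ∀ᶠ p : EE n × EE n in nhds (0, 0), -p.2 ∈ polarBody K :=
    (continuous_snd.tendsto ((0 : EE n), (0 : EE n))) hmem
  set r : ℝ := min 1 (min (1 / R) (1 / (R' + 1))) with hr
  have hr0 : 0 < r := by positivity
  filter_upwards [hmem2, Metric.ball_mem_nhds ((0 : EE n), (0 : EE n)) hr0] with p hp2 hp
  have hp : ‖p‖ < r := by simpa using mem_ball_zero_iff.1 hp
  have hpa : ‖p‖ < 1 := lt_of_lt_of_le hp (min_le_left _ _)
  have hpb : ‖p‖ < 1 / R := lt_of_lt_of_le hp ((min_le_right _ _).trans (min_le_left _ _))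
  have hpc : ‖p‖ < 1 / (R' + 1) := lt_of_lt_of_le hp ((min_le_right _ _).trans (min_le_right _ _))
  rw [lt_div_iff₀ (by positivity)] at hpb hpc
  have hn1 : ‖p.1‖ ≤ ‖p‖ := norm_fst_le p
  have hn2 : ‖p.2‖ ≤ ‖p‖ := norm_snd_le p
  have hLs : ∀ w ∈ (fun y => y + p.2) '' polarBody K, ‖w‖ ≤ R' + 1 := by
    rintro _ ⟨y, hy, rfl⟩
    have := norm_add_le y p.2
    have := hb' y hy
    simp only
    linarith
  have hMint := zero_mem_interior_polarBody _ (R' + 1) (by positivity) hLs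
  have himg : (fun y => y + p.2) '' polarBody K = (Homeomorph.addRight p.2) '' polarBody K := rfl
  have hMbip : polarBody (polarBody ((fun y => y + p.2) '' polarBody K))
      = (fun y => y + p.2) '' polarBody K := by
    apply bipolar
    · have := (convex_polarBody K).translate p.2
      simpa [add_comm] using this
    · rw [himg, Homeomorph.isClosed_image]
      exact isClosed_polarBody K
    · exact ⟨-p.2, hp2, by simp⟩
  unfold FK vp
  have hv1 : volume ((fun y => y + p.1) '' polarBody ((fun y => y + p.2) '' polarBody K))
      = volume (polarBody ((fun y => y + p.2) '' polarBody K)) := by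
    simp
  rw [hv1, volume_polar_shift _ hLint, volume_polar_shift _ hMint, hbip, hMbip]
  · simp only [add_zero]
    congr 1
    have := (measurePreserving_add_right (volume : Measure (EE n)) p.2).setIntegral_image_emb
      (Homeomorph.addRight p.2).measurableEmbedding
      (fun z => ((1 + ⟪p.1, z⟫) ^ (n + 1))⁻¹) (polarBody K)
    exact this
  · rw [hMbip]
    intro z hz
    have h1 := hLs z hz
    have h2 := (abs_le.1 (abs_real_inner_le_norm p.1 z)).1
    have : ‖p.1‖ * ‖z‖ ≤ ‖p‖ * (R' + 1) := by gcongr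
    linarith
  · rw [hbip]
    intro z hz
    have h1 := hb z hz
    have h2 := (abs_le.1 (abs_real_inner_le_norm p.2 z)).1
    have : ‖p.2‖ * ‖z‖ ≤ ‖p‖ * R := by gcongr
    linarith

theorem stmt2 {n : ℕ} (hn : 1 ≤ n) (K : Set (EuclideanSpace ℝ (Fin n)))
    (hKcomp : IsCompact K) (hKconv : Convex ℝ K)
    (hK0 : (0 : EuclideanSpace ℝ (Fin n)) ∈ interior K) :
    fderiv ℝ (FK K) (0, 0) = 0 ↔
      (bary K = 0 ∧ bary (polarBody K) = 0) := by
  obtain ⟨R, hR, hb⟩ : ∃ R > 0, ∀ z ∈ K, ‖z‖ ≤ R := hKcomp.isBounded.exists_pos_norm_le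
  obtain ⟨R', hR', hb'⟩ := polarBody_bounded K hK0
  have hLint := zero_mem_interior_polarBody K R hR hb
  have hLcomp : IsCompact (polarBody K) := by
    refine Metric.isCompact_of_isClosed_isBounded (isClosed_polarBody K) ?_
    exact isBounded_iff_forall_norm_le.2 ⟨R', hb'⟩
  have hvol : ∀ S : Set (EE n), IsCompact S → (0 : EE n) ∈ interior S →
      0 < (volume S).toReal := fun S hS h0 =>
    ENNReal.toReal_pos (Measure.measure_pos_of_mem_nhds volume (mem_interior_iff_mem_nhds.1 h0)).ne'
      hS.measure_lt_top.ne
  have hVK := hvol K hKcomp hK0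
  have hVL := hvol _ hLcomp hLint
  have hL := hasFDerivAt_int (polarBody K) hLcomp
  have hK := hasFDerivAt_int K hKcomp
  let J : EE n × EE n →L[ℝ] EE n × EE n :=
    (ContinuousLinearMap.snd ℝ (EE n) (EE n)).prod 0
  have hJ : HasFDerivAt (fun p : EE n × EE n => ∫ z in K, ((1 + ⟪p.2, z + 0⟫) ^ (n + 1))⁻¹)
      (((-((n : ℝ) + 1)) • (innerSL ℝ (∫ z in K, z)).comp
        (ContinuousLinearMap.fst ℝ (EE n) (EE n))).comp J) (0, 0) :=
    HasFDerivAt.comp (f := J) ((0 : EE n), (0 : EE n)) hK J.hasFDerivAt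
  have hprod := (hJ.mul hL).congr_of_eventuallyEq (FK_eventually K hKcomp hKconv hK0)
  rw [hprod.fderiv]
  have hn0 : (n : ℝ) + 1 ≠ 0 := by positivity
  have hK1 : (∫ z in K, ((1 + ⟪(0 : EE n), z + 0⟫) ^ (n + 1))⁻¹) = (volume K).toReal := by
    simp [Measure.real]
  have hL1 : (∫ z in polarBody K, ((1 + ⟪(0 : EE n), z + 0⟫) ^ (n + 1))⁻¹)
      = (volume (polarBody K)).toReal := by
    simp [Measure.real]
  simp only [hK1, hL1]
  unfold bary
  rw [smul_eq_zero_iff_right (inv_ne_zero hVK.ne'), smul_eq_zero_iff_right (inv_ne_zero hVL.ne')]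
  constructor
  · intro h
    constructor
    · have := congrArg (fun A => A ((0 : EE n), ∫ z in K, z)) h
      simpa [J, hVK.ne', hVL.ne', hn0, -neg_add_rev] using this
    · have := congrArg (fun A => A ((∫ z in polarBody K, z), (0 : EE n))) h
      simpa [J, hVK.ne', hVL.ne', hn0, -neg_add_rev] using this
  · rintro ⟨h1, h2⟩
    rw [h1, h2]
    simp
end
end

section
/- Let n ≥ 1, let K ⊂ ℝⁿ be a convex body containing the origin in its interior, and let ξ ∈ ℝⁿ be such that −ξ lies in the interior of K°. Then 1 + ⟨ξ, y⟩ > 0 for every y ∈ K, and the image of K under the map y ↦ y / (1 + ⟨ξ, y⟩) equals the convex body (K° + ξ)°. -/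
open MeasureTheory RealInnerProductSpace

noncomputable section

theorem stmt10 {n : ℕ} (hn : 1 ≤ n) (K : Set (EuclideanSpace ℝ (Fin n)))
    (hKcomp : IsCompact K) (hKconv : Convex ℝ K)
    (hK0 : (0 : EuclideanSpace ℝ (Fin n)) ∈ interior K)
    (ξ : EuclideanSpace ℝ (Fin n)) (hξ : -ξ ∈ interior (polarBody K)) :
    (∀ y ∈ K, 0 < 1 + ⟪ξ, y⟫) ∧
    (fun y => (1 + ⟪ξ, y⟫)⁻¹ • y) '' K = polarBody ((fun z => z + ξ) '' polarBody K) := by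
  have h1 : ∀ y ∈ K, 0 < 1 + ⟪ξ, y⟫ := by
    intro y hy
    by_cases hy0 : y = 0
    · simp [hy0]
    obtain ⟨ε, hε, hb⟩ := Metric.isOpen_iff.1 isOpen_interior _ hξ
    have hn0 : 0 < ‖y‖ := norm_pos_iff.2 hy0
    have hm : -ξ + (ε / 2 / ‖y‖) • y ∈ polarBody K := by
      apply interior_subset
      apply hb
      rw [Metric.mem_ball, dist_eq_norm, add_sub_cancel_left, norm_smul, Real.norm_eq_abs,
        abs_of_pos (by positivity), div_mul_cancel₀ _ hn0.ne']
      linarith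
    have h := hm y hy
    rw [inner_add_right, inner_neg_right, inner_smul_right, real_inner_self_eq_norm_sq,
      real_inner_comm] at h
    have : 0 < ε / 2 / ‖y‖ * ‖y‖ ^ 2 := by positivity
    linarith
  refine ⟨h1, ?_⟩
  ext w
  constructor
  · rintro ⟨y, hy, rfl⟩
    rintro _ ⟨z, hz, rfl⟩
    have hc := h1 y hy
    have h := hz y hy
    rw [real_inner_comm] at h
    simp only [inner_smul_right, inner_add_left]
    rw [inv_mul_le_iff₀ hc]
    linarith
  · intro hw
    have hw' : ∀ z ∈ polarBody K, ⟪z, w⟫ + ⟪ξ, w⟫ ≤ 1 := by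
      intro z hz
      have := hw _ ⟨z, hz, rfl⟩
      simpa only [inner_add_left] using this
    have hd : 0 < 1 - ⟪ξ, w⟫ := by
      by_cases hw0 : w = 0
      · simp [hw0]
      have hn0 : 0 < ‖w‖ := norm_pos_iff.2 hw0
      obtain ⟨M, hM, hb⟩ := hKcomp.isBounded.exists_pos_norm_le
      have hm : (1 / (M * ‖w‖)) • w ∈ polarBody K := by
        intro x hx
        rw [inner_smul_right, one_div, inv_mul_le_iff₀ (by positivity), mul_one]
        exact (real_inner_le_norm x w).trans
          (mul_le_mul_of_nonneg_right (hb x hx) hn0.le)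
      have h := hw' _ hm
      rw [inner_smul_left, real_inner_self_eq_norm_sq] at h
      have : 0 < 1 / (M * ‖w‖) * ‖w‖ ^ 2 := by positivity
      simp only [conj_trivial] at h
      linarith
    refine ⟨(1 - ⟪ξ, w⟫)⁻¹ • w, ?_, ?_⟩
    · by_contra hy
      obtain ⟨f, u, hf, hu⟩ := geometric_hahn_banach_closed_point hKconv hKcomp.isClosed hy
      have hu0 : 0 < u := by simpa using hf 0 (interior_subset hK0)
      have hin : ∀ x, ⟪(InnerProductSpace.toDual ℝ _).symm f, x⟫ = f x := fun x =>
        InnerProductSpace.toDual_symm_apply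
      have hm : u⁻¹ • (InnerProductSpace.toDual ℝ _).symm f ∈ polarBody K := by
        intro x hx
        rw [inner_smul_right, real_inner_comm, hin, inv_mul_le_iff₀ hu0, mul_one]
        exact (hf x hx).le
      have h := hw' _ hm
      rw [inner_smul_left, hin, conj_trivial] at h
      rw [map_smul, smul_eq_mul, lt_inv_mul_iff₀ hd] at hu
      have h3 : u⁻¹ * f w ≤ 1 - ⟪ξ, w⟫ := by linarith
      rw [inv_mul_le_iff₀ hu0] at h3
      linarith
    · simp only [inner_smul_right, smul_smul]
      have : (1 + (1 - ⟪ξ, w⟫)⁻¹ * ⟪ξ, w⟫)⁻¹ * (1 - ⟪ξ, w⟫)⁻¹ = 1 := by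
        have e : 1 + (1 - ⟪ξ, w⟫)⁻¹ * ⟪ξ, w⟫ = (1 - ⟪ξ, w⟫)⁻¹ := by
          field_simp
          ring
        rw [e, inv_inv, mul_inv_cancel₀ hd.ne']
      rw [this, one_smul]
end
end

section
/- Let n ≥ 1, let K ⊂ ℝⁿ be a convex body containing the origin in its interior, let M be an invertible n×n real matrix, and let x, ξ ∈ ℝⁿ be such that −ξ ∈ int(K°) and −x ∈ int((K°+ξ)°). Consider the (projective) map T(y) = M·(x + y/(1 + ⟨ξ, y⟩)). Then T(K) is a convex body containing the origin in its interior, and vp(T(K)) = vp((K°+ξ)° + x) = F_K(x, ξ). -/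
open MeasureTheory RealInnerProductSpace

noncomputable section

lemma aux_strict {n : ℕ} {S : Set (EuclideanSpace ℝ (Fin n))} {v z : EuclideanSpace ℝ (Fin n)}
    {c : ℝ} (hv : v ∈ interior S) (hz : z ≠ 0) (h : ∀ w ∈ S, ⟪z, w⟫ ≤ c) : ⟪z, v⟫ < c := by
  have hc : Filter.Tendsto (fun t : ℝ => v + t • z) (nhdsWithin 0 (Set.Ioi 0)) (nhds v) := by
    have : Continuous (fun t : ℝ => v + t • z) := by fun_prop
    have h0 := this.tendsto 0
    simp only [zero_smul, add_zero] at h0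
    exact h0.mono_left nhdsWithin_le_nhds
  have he := hc.eventually (mem_interior_iff_mem_nhds.mp hv)
  obtain ⟨t, ht, htp⟩ := (he.and self_mem_nhdsWithin).exists
  have h1 := h _ ht
  rw [inner_add_right, inner_smul_right] at h1
  have h2 : 0 < ⟪z, z⟫ := real_inner_self_pos.mpr hz
  have h3 : 0 < t * ⟪z, z⟫ := mul_pos htp h2
  linarith

lemma aux_zero_int {n : ℕ} {K : Set (EuclideanSpace ℝ (Fin n))} (hK : IsCompact K) :
    (0 : EuclideanSpace ℝ (Fin n)) ∈ interior (polarBody K) := by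
  obtain ⟨R, hR, hb⟩ := hK.isBounded.exists_pos_norm_le
  rw [mem_interior_iff_mem_nhds]
  refine Filter.mem_of_superset (Metric.ball_mem_nhds 0 (inv_pos.mpr hR)) ?_
  intro y hy a ha
  rw [mem_ball_zero_iff] at hy
  calc ⟪a, y⟫ ≤ ‖a‖ * ‖y‖ := real_inner_le_norm _ _
    _ ≤ R * R⁻¹ := mul_le_mul (hb a ha) hy.le (norm_nonneg _) hR.le
    _ = 1 := mul_inv_cancel₀ hR.ne'

lemma aux_bipolar {n : ℕ} {K : Set (EuclideanSpace ℝ (Fin n))} (hK : IsCompact K)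
    (hc : Convex ℝ K) (h0 : (0 : EuclideanSpace ℝ (Fin n)) ∈ K) {y : EuclideanSpace ℝ (Fin n)}
    (hy : ∀ w ∈ polarBody K, ⟪w, y⟫ ≤ 1) : y ∈ K := by
  by_contra hn
  obtain ⟨f, u, h1, h2⟩ := geometric_hahn_banach_closed_point hc hK.isClosed hn
  have hu : 0 < u := by simpa using h1 0 h0
  have key : ∀ a, ⟪u⁻¹ • (InnerProductSpace.toDual ℝ _).symm f, a⟫ = u⁻¹ * f a := by
    intro a
    rw [real_inner_smul_left, InnerProductSpace.toDual_symm_apply]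
  have h3 := hy (u⁻¹ • (InnerProductSpace.toDual ℝ _).symm f) (by
    intro a ha
    rw [real_inner_comm, key, inv_mul_le_iff₀ hu]
    linarith [h1 a ha])
  rw [key, inv_mul_le_iff₀ hu] at h3
  linarith

lemma aux_polar_convex {n : ℕ} (K : Set (EuclideanSpace ℝ (Fin n))) :
    Convex ℝ (polarBody K) := by
  intro a ha b hb s t hs ht hst y hy
  rw [inner_add_right, inner_smul_right, inner_smul_right]
  have h1 := mul_le_mul_of_nonneg_left (ha y hy) hs
  have h2 := mul_le_mul_of_nonneg_left (hb y hy) ht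
  linarith

lemma aux_pos {n : ℕ} {K : Set (EuclideanSpace ℝ (Fin n))} {ξ : EuclideanSpace ℝ (Fin n)}
    (hξ : -ξ ∈ interior (polarBody K)) {y : EuclideanSpace ℝ (Fin n)} (hy : y ∈ K) :
    0 < 1 + ⟪ξ, y⟫ := by
  rcases eq_or_ne y 0 with rfl | h
  · simp
  · have := aux_strict (c := 1) hξ h (fun w hw => hw y hy)
    rw [inner_neg_right, real_inner_comm] at this
    linarith

lemma aux_image {n : ℕ} {K : Set (EuclideanSpace ℝ (Fin n))} {ξ : EuclideanSpace ℝ (Fin n)}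
    (hK : IsCompact K) (hc : Convex ℝ K) (h0 : (0 : EuclideanSpace ℝ (Fin n)) ∈ K)
    (hξ : -ξ ∈ interior (polarBody K)) :
    (fun y => (1 + ⟪ξ, y⟫)⁻¹ • y) '' K = polarBody ((fun z => z + ξ) '' polarBody K) := by
  apply Set.Subset.antisymm
  · rintro _ ⟨y, hy, rfl⟩ _ ⟨w, hw, rfl⟩
    have hp := aux_pos hξ hy
    have := hw y hy
    rw [real_inner_comm] at this
    simp only [inner_smul_right, inner_add_left]
    rw [inv_mul_le_iff₀ hp]
    linarith
  · intro z hz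
    rcases eq_or_ne z 0 with rfl | h
    · exact ⟨0, h0, by simp⟩
    have hz' : ∀ w ∈ polarBody K, ⟪z, w⟫ ≤ 1 - ⟪ξ, z⟫ := by
      intro w hw
      have := hz _ ⟨w, hw, rfl⟩
      simp only [inner_add_left] at this
      rw [real_inner_comm]
      linarith
    have hp : 0 < 1 - ⟪ξ, z⟫ := by
      have := aux_strict (aux_zero_int hK) h hz'
      simpa using this
    refine ⟨(1 - ⟪ξ, z⟫)⁻¹ • z, aux_bipolar hK hc h0 ?_, ?_⟩
    · intro w hw
      rw [inner_smul_right, inv_mul_le_iff₀ hp, real_inner_comm]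
      linarith [hz' w hw]
    · simp only [inner_smul_right, smul_smul]
      have : (1 + (1 - ⟪ξ, z⟫)⁻¹ * ⟪ξ, z⟫)⁻¹ * (1 - ⟪ξ, z⟫)⁻¹ = 1 := by
        rw [← mul_inv, add_mul, mul_right_comm, inv_mul_cancel₀ hp.ne']
        norm_num
      rw [this, one_smul]

lemma aux_vp {n : ℕ} (A : Set (EuclideanSpace ℝ (Fin n))) (M : Matrix (Fin n) (Fin n) ℝ)
    (hM : M.det ≠ 0) : vp (Matrix.toEuclideanLin M '' A) = vp A := by
  have hd : LinearMap.det (Matrix.toEuclideanLin M) = M.det := LinearMap.det_toLpLin 2 M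
  have hd' : LinearMap.det (LinearMap.adjoint (Matrix.toEuclideanLin M)) = M.det := by
    rw [← Matrix.toEuclideanLin_conjTranspose_eq_adjoint]
    refine (LinearMap.det_toLpLin 2 _).trans ?_
    rw [Matrix.det_conjTranspose]
    simp
  have hp : polarBody (Matrix.toEuclideanLin M '' A) =
      LinearMap.adjoint (Matrix.toEuclideanLin M) ⁻¹' polarBody A := by
    ext y
    simp only [polarBody, Set.mem_setOf_eq, Set.forall_mem_image, Set.mem_preimage,
      LinearMap.adjoint_inner_right]
  unfold vp
  rw [hp, Measure.addHaar_image_linearMap,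
    Measure.addHaar_preimage_linearMap _ (by rw [hd']; exact hM), hd, hd',
    ENNReal.toReal_mul, ENNReal.toReal_mul, ENNReal.toReal_ofReal (abs_nonneg _),
    ENNReal.toReal_ofReal (abs_nonneg _), abs_inv]
  have := abs_ne_zero.mpr hM
  field_simp

theorem stmt11 {n : ℕ} (hn : 1 ≤ n) (K : Set (EuclideanSpace ℝ (Fin n)))
    (hKcomp : IsCompact K) (hKconv : Convex ℝ K)
    (hK0 : (0 : EuclideanSpace ℝ (Fin n)) ∈ interior K)
    (M : Matrix (Fin n) (Fin n) ℝ) (hM : M.det ≠ 0)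
    (x ξ : EuclideanSpace ℝ (Fin n)) (hξ : -ξ ∈ interior (polarBody K))
    (hx : -x ∈ interior (polarBody ((fun z => z + ξ) '' polarBody K))) :
    ∀ T : EuclideanSpace ℝ (Fin n) → EuclideanSpace ℝ (Fin n),
      (∀ y, T y = (WithLp.toLp 2 (M.mulVec (x + (1 + ⟪ξ, y⟫)⁻¹ • y)) : EuclideanSpace ℝ (Fin n))) →
      IsCompact (T '' K) ∧ Convex ℝ (T '' K) ∧
        (0 : EuclideanSpace ℝ (Fin n)) ∈ interior (T '' K) ∧
        vp (T '' K) = vp ((fun z => z + x) '' polarBody ((fun z => z + ξ) '' polarBody K)) ∧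
        vp (T '' K) = FK K (x, ξ) := by
  intro T hT
  have hpos : ∀ y ∈ K, 0 < 1 + ⟪ξ, y⟫ := fun y hy => aux_pos hξ hy
  have hTL : ∀ y, T y = Matrix.toEuclideanLin M ((1 + ⟪ξ, y⟫)⁻¹ • y + x) := by
    intro y
    rw [hT, add_comm]
    rfl
  have himg : T '' K = Matrix.toEuclideanLin M ''
      ((fun z => z + x) '' polarBody ((fun z => z + ξ) '' polarBody K)) := by
    rw [← aux_image hKcomp hKconv (interior_subset hK0) hξ, Set.image_image, Set.image_image]
    exact Set.image_congr fun y _ => hTL y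
  have hvp : vp (T '' K) =
      vp ((fun z => z + x) '' polarBody ((fun z => z + ξ) '' polarBody K)) := by
    rw [himg, aux_vp _ _ hM]
  refine ⟨?_, ?_, ?_, hvp, hvp⟩
  · apply hKcomp.image_of_continuousOn
    have h1 : ContinuousOn (fun y => (1 + ⟪ξ, y⟫)⁻¹ • y + x) K := by
      have h2 : ContinuousOn (fun y : EuclideanSpace ℝ (Fin n) => 1 + ⟪ξ, y⟫) K := by fun_prop
      have h3 : ContinuousOn (fun y : EuclideanSpace ℝ (Fin n) => (1 + ⟪ξ, y⟫)⁻¹) K :=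
        h2.inv₀ fun y hy => (hpos y hy).ne'
      fun_prop
    refine ContinuousOn.congr ((LinearMap.continuous_of_finiteDimensional
      (Matrix.toEuclideanLin M)).comp_continuousOn h1) fun y _ => hTL y
  · rw [himg]
    apply Convex.linear_image
    simpa only [add_comm] using (aux_polar_convex _).translate x
  · have hsurj : Function.Surjective (Matrix.toEuclideanLin M) := by
      have hd : LinearMap.det (Matrix.toEuclideanLin M) = M.det := LinearMap.det_toLpLin 2 M
      have hu : IsUnit (LinearMap.det (Matrix.toEuclideanLin M)) := by
        rw [hd]; exact isUnit_iff_ne_zero.mpr hM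
      have hu2 := (LinearMap.isUnit_iff_isUnit_det _).mpr hu
      exact ((Module.End.isUnit_iff _).mp hu2).surjective
    have ho := LinearMap.isOpenMap_of_finiteDimensional _ hsurj
    rw [himg]
    apply ho.image_interior_subset
    refine ⟨0, ?_, map_zero _⟩
    apply (isOpenMap_add_right x).image_interior_subset
    exact ⟨-x, hx, by simp⟩
end
end

section
/- Define f(q,b) = q³b − q²b² − q² + 2qb⁵ + qb + 3b⁴. The set {(q,b) ∈ [−1/√2, 1/√2] × [1/√2, √2] : f(q,b) = 1} is the graph of a smooth, strictly decreasing function q ↦ b(q) on [−1/√2, 1/√2]; in particular, for every q ∈ [−1/√2, 1/√2] there exists a unique b ∈ [1/√2, √2] with f(q,b) = 1, and this b depends smoothly and strictly decreasingly on q, with b(−1/√2) = √2 and b(1/√2) = 1/√2. -/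
noncomputable section

/-- The polynomial `f(q,b) = q³b − q²b² − q² + 2qb⁵ + qb + 3b⁴`. -/
def f (q b : ℝ) : ℝ :=
  q ^ 3 * b - q ^ 2 * b ^ 2 - q ^ 2 + 2 * q * b ^ 5 + q * b + 3 * b ^ 4

/-- The polynomial after rescaling `q = x/√2`, `b = u/√2`. -/
def FF (x u : ℝ) : ℝ := x^3*u - x^2*u^2 - 2*x^2 + x*u^5 + 2*x*u + 3*u^4

/-- Its partial derivative in `u`. -/
def FFu (x u : ℝ) : ℝ := x^3 - 2*x^2*u + 5*x*u^4 + 2*x + 12*u^3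

lemma FF_hasDeriv (x u : ℝ) : HasDerivAt (FF x) (FFu x u) u := by
  have h := (((((((hasDerivAt_id u).const_mul (x^3)).sub (((hasDerivAt_id u).pow 2).const_mul (x^2))).sub
    (hasDerivAt_const u (2*x^2))).add (((hasDerivAt_id u).pow 5).const_mul x)).add
    ((hasDerivAt_id u).const_mul (2*x))).add (((hasDerivAt_id u).pow 4).const_mul 3))
  refine HasDerivAt.congr_deriv (f' := _) (h.congr_of_eventuallyEq (Filter.Eventually.of_forall fun v => ?_)) ?_
  · simp [FF]
  · simp [FFu]; ring

lemma FFu_pos {x u : ℝ} (hx : -1 ≤ x) (hx1 : x ≤ 1) (hu : 0.9 ≤ u) (hu1 : u ≤ 2.2) :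
    0 < FFu x u := by
  have h1 : 0 < -5*u^4+12*u^3-2*u-3 := by
    norm_num at hu hu1
    have e : -5*u^4+12*u^3-2*u-3 = (u-9/10)*(11/5-u)*(5*u^2+7/2*u+13/5) + (2.6*9.9/5 - 3) + (u * (-2 + 3.5*99/50 - 2.6*3.1)) + u^2*(5*99/50 - 3.5*3.1+2.6) := by ring
    have : 0 ≤ (u-9/10)*(11/5-u) := mul_nonneg (by linarith) (by linarith)
    have h2 : 0 ≤ (u-9/10)*(11/5-u)*(5*u^2+7/2*u+13/5) := mul_nonneg this (by positivity)
    nlinarith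
  have h2 : 0 ≤ (x+1)*(x^2-x+1 + 2*u*(1-x)+5*u^4+2) := by
    apply mul_nonneg (by linarith)
    have : 0 ≤ 2*u*(1-x) := mul_nonneg (by norm_num at hu; linarith) (by linarith)
    have : 0 ≤ 5*u^4 := by positivity
    nlinarith
  unfold FFu
  nlinarith

lemma FF_mono_u {x : ℝ} (hx : -1 ≤ x) (hx1 : x ≤ 1) : StrictMonoOn (FF x) (Set.Icc 0.9 2.2) := by
  apply strictMonoOn_of_deriv_pos (convex_Icc _ _)
  · exact fun u _ => (FF_hasDeriv x u).continuousAt.continuousWithinAt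
  · intro u hu
    have hu := interior_subset hu
    rw [(FF_hasDeriv x u).deriv]
    exact FFu_pos hx hx1 hu.1 hu.2

lemma FF_mono_x {x y u : ℝ} (hx : -1 ≤ x) (hy : y ≤ 1) (hxy : x < y) (hu : 1 ≤ u) :
    FF x u < FF y u := by
  obtain ⟨t, rfl⟩ : ∃ t, u = 1 + t := ⟨u-1, by ring⟩
  have ht : 0 ≤ t := by linarith
  have key : 0 < (x^2+x*y+y^2-3*(x+y)+3) + t*(x^2+x*y+y^2 -2*(x+y)+7) + t^2*(10-(x+y))
      + 10*t^3+5*t^4+t^5 := by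
    have h0 : 0 < x^2+x*y+y^2-3*(x+y)+3 := by
      nlinarith [sq_nonneg ((1-x)+(1-y)), sq_nonneg (1-y), mul_nonneg (sub_nonneg.2 hxy.le) (sub_nonneg.2 hy), mul_pos (sub_pos.2 hxy) (sub_pos.2 hxy)]
    have h1 : 0 ≤ t*(x^2+x*y+y^2 -2*(x+y)+7) := mul_nonneg ht (by nlinarith)
    have h2 : 0 ≤ t^2*(10-(x+y)) := mul_nonneg (by positivity) (by linarith)
    positivity
  have := mul_pos (sub_pos.2 hxy) key
  unfold FF
  nlinarith

lemma FF_one (x : ℝ) : FF x 1 = (x-1)^3 + 4 := by unfold FF; ring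

lemma FF_exists {x : ℝ} (hx : -1 ≤ x) (hx1 : x ≤ 1) : ∃ u ∈ Set.Icc (1:ℝ) 2, FF x u = 4 := by
  have hc : ContinuousOn (FF x) (Set.Icc 1 2) :=
    fun u _ => (FF_hasDeriv x u).continuousAt.continuousWithinAt
  have h := intermediate_value_Icc (by norm_num : (1:ℝ) ≤ 2) hc
  have h4 : (4:ℝ) ∈ Set.Icc (FF x 1) (FF x 2) := by
    constructor
    · rw [FF_one]
      have : 0 ≤ (1-x)^3 := pow_nonneg (by linarith) 3
      nlinarith
    · rcases hx.eq_or_lt with rfl | h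
      · norm_num [FF]
      · have := FF_mono_x (le_refl (-1)) hx1 h (by norm_num : (1:ℝ) ≤ 2)
        have e : FF (-1) 2 = 4 := by norm_num [FF]
        linarith
  exact h h4

lemma FF_unique {x u v : ℝ} (hx : -1 ≤ x) (hx1 : x ≤ 1) (hu : u ∈ Set.Icc (0.9:ℝ) 2.2)
    (hv : v ∈ Set.Icc (0.9:ℝ) 2.2) (h : FF x u = FF x v) : u = v :=
  (FF_mono_u hx hx1).injOn hu hv h

lemma big {u : ℝ} (hu : u ∈ Set.Icc (1:ℝ) 2) : u ∈ Set.Icc (0.9:ℝ) 2.2 :=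
  ⟨by norm_num; linarith [hu.1], by norm_num; linarith [hu.2]⟩

lemma FF_smooth (G : ℝ → ℝ) (hG : ∀ x ∈ Set.Icc (-1:ℝ) 1, G x ∈ Set.Icc (1:ℝ) 2 ∧ FF x (G x) = 4) :
    ContDiffOn ℝ (⊤ : ℕ∞) G (Set.Icc (-1) 1) := by
  intro x hx
  obtain ⟨hg, hF⟩ := hG x hx
  have cdf : ContDiffAt ℝ (⊤ : ℕ∞) (fun p : ℝ × ℝ => FF p.1 p.2) (x, G x) := by
    unfold FF; fun_prop
  have pn : ((⊤ : ℕ∞) : WithTop ℕ∞) ≠ 0 := by simp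
  have hd : (fderiv ℝ (fun p : ℝ × ℝ => FF p.1 p.2) (x, G x) ∘L .inr ℝ ℝ ℝ) 1 = FFu x (G x) := by
    have h1 := (cdf.differentiableAt pn).hasFDerivAt
    have h2 : HasDerivAt (fun u : ℝ => (x, u)) ((0:ℝ), (1:ℝ)) (G x) :=
      (hasDerivAt_const _ _).prodMk (hasDerivAt_id _)
    have h3 := h1.comp_hasDerivAt (G x) h2
    exact h3.unique (FF_hasDeriv x (G x))
  have hpos : FFu x (G x) ≠ 0 := (FFu_pos hx.1 hx.2 (big hg).1 (big hg).2).ne'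
  have if₂ : (fderiv ℝ (fun p : ℝ × ℝ => FF p.1 p.2) (x, G x) ∘L .inr ℝ ℝ ℝ).IsInvertible := by
    refine ⟨ContinuousLinearEquiv.unitsEquivAut ℝ (Units.mk0 _ hpos), ?_⟩
    ext
    simpa using hd.symm
  have hs := cdf.contDiffAt_implicitFunction pn if₂
  have he := cdf.eventually_apply_implicitFunction pn if₂
  have h0 := cdf.implicitFunction_apply_self pn if₂
  have hc := hs.continuousAt
  set ψ := cdf.implicitFunction pn if₂
  simp only at hs he h0 hc
  refine hs.contDiffWithinAt.congr_of_eventuallyEq ?_ h0.symm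
  have hn : ∀ᶠ y in nhds x, ψ y ∈ Set.Icc (0.9:ℝ) 2.2 := by
    apply hc.eventually_mem
    rw [h0]
    exact Icc_mem_nhds (by norm_num; linarith [hg.1]) (by norm_num; linarith [hg.2])
  filter_upwards [nhdsWithin_le_nhds he, nhdsWithin_le_nhds hn, self_mem_nhdsWithin] with y h1 h2 h3
  obtain ⟨a, b⟩ := hG y h3
  exact FF_unique h3.1 h3.2 (big a) h2 (by rw [b, h1, hF])

lemma f_FF (q b : ℝ) : f q b = FF (Real.sqrt 2 * q) (Real.sqrt 2 * b) / 4 := by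
  have h2 : Real.sqrt 2 ^ 2 = 2 := Real.sq_sqrt (by norm_num)
  have h4 : Real.sqrt 2 ^ 4 = 4 := by rw [show Real.sqrt 2 ^ 4 = (Real.sqrt 2 ^ 2)^2 by ring, h2]; norm_num
  have h6 : Real.sqrt 2 ^ 6 = 8 := by rw [show Real.sqrt 2 ^ 6 = (Real.sqrt 2 ^ 2)^3 by ring, h2]; norm_num
  unfold f FF
  generalize Real.sqrt 2 = s at *
  linear_combination (-(1/4) * (q^3*b-q^2*b^2+3*b^4)) * h4 - (1/4) * (2*q*b-2*q^2) * h2 - 1/4*q*b^5 * h6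

theorem stmt14 :
    ∃ g : ℝ → ℝ,
      ContDiffOn ℝ (⊤ : ℕ∞) g (Set.Icc (-(1 / Real.sqrt 2)) (1 / Real.sqrt 2)) ∧
      StrictAntiOn g (Set.Icc (-(1 / Real.sqrt 2)) (1 / Real.sqrt 2)) ∧
      (∀ q ∈ Set.Icc (-(1 / Real.sqrt 2)) (1 / Real.sqrt 2),
        g q ∈ Set.Icc (1 / Real.sqrt 2) (Real.sqrt 2)) ∧
      {p : ℝ × ℝ | p.1 ∈ Set.Icc (-(1 / Real.sqrt 2)) (1 / Real.sqrt 2) ∧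
          p.2 ∈ Set.Icc (1 / Real.sqrt 2) (Real.sqrt 2) ∧ f p.1 p.2 = 1}
        = {p : ℝ × ℝ | p.1 ∈ Set.Icc (-(1 / Real.sqrt 2)) (1 / Real.sqrt 2) ∧ p.2 = g p.1} ∧
      g (-(1 / Real.sqrt 2)) = Real.sqrt 2 ∧
      g (1 / Real.sqrt 2) = 1 / Real.sqrt 2 ∧
      (∀ q ∈ Set.Icc (-(1 / Real.sqrt 2)) (1 / Real.sqrt 2),
        ∃! b, b ∈ Set.Icc (1 / Real.sqrt 2) (Real.sqrt 2) ∧ f q b = 1) := by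
  have hs : 0 < Real.sqrt 2 := by positivity
  have hss : Real.sqrt 2 * Real.sqrt 2 = 2 := Real.mul_self_sqrt (by norm_num)
  have hi : Real.sqrt 2 * (1 / Real.sqrt 2) = 1 := by field_simp
  have hq : ∀ q, q ∈ Set.Icc (-(1 / Real.sqrt 2)) (1 / Real.sqrt 2) ↔
      Real.sqrt 2 * q ∈ Set.Icc (-1:ℝ) 1 := by
    intro q
    rw [Set.mem_Icc, Set.mem_Icc, ← mul_le_mul_iff_right₀ hs, ← mul_le_mul_iff_right₀ (b := q) hs,
      mul_neg, hi]
  have hb : ∀ b, b ∈ Set.Icc (1 / Real.sqrt 2) (Real.sqrt 2) ↔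
      Real.sqrt 2 * b ∈ Set.Icc (1:ℝ) 2 := by
    intro b
    rw [Set.mem_Icc, Set.mem_Icc, ← mul_le_mul_iff_right₀ hs, ← mul_le_mul_iff_right₀ (b := b) hs,
      hi, hss]
  have hf : ∀ q b, f q b = 1 ↔ FF (Real.sqrt 2 * q) (Real.sqrt 2 * b) = 4 := by
    intro q b
    rw [f_FF]
    constructor <;> intro h <;> linarith
  have hex : ∀ x : ℝ, ∃ u, x ∈ Set.Icc (-1:ℝ) 1 → u ∈ Set.Icc (1:ℝ) 2 ∧ FF x u = 4 := by
    intro x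
    by_cases hx : x ∈ Set.Icc (-1:ℝ) 1
    · obtain ⟨u, h⟩ := FF_exists hx.1 hx.2
      exact ⟨u, fun _ => h⟩
    · exact ⟨0, fun h => absurd h hx⟩
  choose G hG using hex
  have hsm := FF_smooth G hG
  have hGI : ∀ q, Real.sqrt 2 * (1 / Real.sqrt 2 * G (Real.sqrt 2 * q)) = G (Real.sqrt 2 * q) := by
    intro q; rw [← mul_assoc, hi, one_mul]
  have hu : ∀ x ∈ Set.Icc (-1:ℝ) 1, ∀ u ∈ Set.Icc (1:ℝ) 2, FF x u = 4 → u = G x := by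
    intro x hx u hu h
    exact FF_unique hx.1 hx.2 (big hu) (big (hG x hx).1) (by rw [h, (hG x hx).2])
  have hbu : ∀ q ∈ Set.Icc (-(1 / Real.sqrt 2)) (1 / Real.sqrt 2),
      ∀ b ∈ Set.Icc (1 / Real.sqrt 2) (Real.sqrt 2), f q b = 1 →
        b = 1 / Real.sqrt 2 * G (Real.sqrt 2 * q) := by
    intro q h1 b h2 h3
    rw [← hu _ ((hq q).1 h1) _ ((hb b).1 h2) ((hf q b).1 h3), ← mul_assoc, mul_comm (1 / Real.sqrt 2),
      hi, one_mul]
  have hmem : ∀ q ∈ Set.Icc (-(1 / Real.sqrt 2)) (1 / Real.sqrt 2),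
      1 / Real.sqrt 2 * G (Real.sqrt 2 * q) ∈ Set.Icc (1 / Real.sqrt 2) (Real.sqrt 2) := by
    intro q h
    rw [hb, hGI]
    exact (hG _ ((hq q).1 h)).1
  have hsol : ∀ q ∈ Set.Icc (-(1 / Real.sqrt 2)) (1 / Real.sqrt 2),
      f q (1 / Real.sqrt 2 * G (Real.sqrt 2 * q)) = 1 := by
    intro q h
    rw [hf, hGI]
    exact (hG _ ((hq q).1 h)).2
  have hip : 0 < 1 / Real.sqrt 2 := by positivity
  refine ⟨fun q => 1 / Real.sqrt 2 * G (Real.sqrt 2 * q), ?_, ?_, hmem, ?_, ?_, ?_, ?_⟩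
  · apply contDiffOn_const.mul
    exact hsm.comp (contDiffOn_const.mul contDiffOn_id) fun q h => (hq q).1 h
  · intro p hp q hq' hpq
    apply mul_lt_mul_of_pos_left _ hip
    have hp := (hq p).1 hp
    have hq' := (hq q).1 hq'
    have hpq := mul_lt_mul_of_pos_left hpq hs
    by_contra! hle
    obtain ⟨a1, a2⟩ := hG _ hp
    obtain ⟨b1, b2⟩ := hG _ hq'
    have h1 := FF_mono_x hp.1 hq'.2 hpq a1.1
    have h2 := (FF_mono_u hq'.1 hq'.2).monotoneOn (big a1) (big b1) hle
    linarith
  · ext ⟨q, b⟩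
    constructor
    · rintro ⟨h1, h2, h3⟩
      exact ⟨h1, hbu q h1 b h2 h3⟩
    · rintro ⟨h1, h2⟩
      simp only at h1 h2
      subst h2
      exact ⟨h1, hmem q h1, hsol q h1⟩
  · have : (2:ℝ) = G (-1) := hu (-1) (by norm_num) 2 (by norm_num) (by norm_num [FF])
    simp only [mul_neg, hi, ← this]
    field_simp
    linarith
  · have : (1:ℝ) = G 1 := hu 1 (by norm_num) 1 (by norm_num) (by norm_num [FF])
    simp only [hi, ← this, mul_one]
  · intro q h
    exact ⟨_, ⟨hmem q h, hsol q h⟩, fun b hb' => hbu q h b hb'.1 hb'.2⟩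
end
end

section
/- Let P = P_{0,b₀} ⊂ ℝ² with b₀ = 3^{−1/4}, i.e., the pentagon given by the convex hull of (−3^{1/4}, 0), (0, ±1), (3^{−1/4}, ±3^{1/4}). Let I(P) be the 2×2 inertia matrix I(P)_{ij} = ∫_P x_i x_j dx. Then |P| = 3^{1/4}(1 + (2/3)√3), I(P)₁₁ = 3^{1/4}(2/9 + √3/6), I(P)₂₂ = 3^{1/4}(1/6 + (2/9)√3), I(P)₁₂ = 0, and det(|P|²·I₂ − 16·I(P)²) = (1/729)·(12√3 + 17)·(4√3 − 13) < 0. -/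
open MeasureTheory

noncomputable section

/-- The inertia matrix `I(P)_{ij} = ∫_P x_i x_j dx`. -/
def inertia (P : Set (Fin 2 → ℝ)) : Matrix (Fin 2) (Fin 2) ℝ :=
  Matrix.of fun i j => ∫ x in P, x i * x j

/-- The pentagon `P_{0, 3^{-1/4}}`: convex hull of `(−3^{1/4}, 0)`, `(0, ±1)`,
`(3^{−1/4}, ±1)` (here `q = 0`, `b = 3^{-1/4}`, `r = 1`, `c = 1`). -/
def P₀ : Set (Fin 2 → ℝ) :=
  convexHull ℝ
    {![-((3 : ℝ) ^ ((1 : ℝ) / 4)), 0], ![0, 1], ![0, -1],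
      ![(3 : ℝ) ^ (-(1 : ℝ) / 4), 1], ![(3 : ℝ) ^ (-(1 : ℝ) / 4), -1]}

lemma conv_two {S : Set (Fin 2 → ℝ)} (hS : Convex ℝ S) {p q x : Fin 2 → ℝ} (hp : p ∈ S) (hq : q ∈ S)
    (t : ℝ) (h0 : 0 ≤ t) (h1 : t ≤ 1) (hx0 : x 0 = (1 - t) * p 0 + t * q 0)
    (hx1 : x 1 = (1 - t) * p 1 + t * q 1) : x ∈ S := by
  have h := hS hp hq (sub_nonneg.2 h1) h0 (by ring)
  have e : x = (1 - t) • p + t • q := by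
    ext i; fin_cases i <;> simp [hx0, hx1]
  rw [e]; exact h

lemma hull_eq (a b : ℝ) (ha : 0 < a) (hb : 0 < b) :
    convexHull ℝ {![-a, 0], ![0, 1], ![0, -1], ![b, 1], ![b, -1]} =
    {x : Fin 2 → ℝ | x 0 ≤ b ∧ (x 1 ≤ 1 ∧ -1 ≤ x 1) ∧
      a * x 1 ≤ a + x 0 ∧ -(a * x 1) ≤ a + x 0} := by
  apply Set.Subset.antisymm
  · apply convexHull_min
    · intro x hx
      simp only [Set.mem_insert_iff, Set.mem_singleton_iff] at hx
      rcases hx with h | h | h | h | h <;> subst h <;>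
        simp <;> (try constructor) <;> (try constructor) <;> linarith
    · intro x hx y hy s t hs ht hst
      obtain ⟨h1, ⟨h2, h3⟩, h4, h5⟩ := hx
      obtain ⟨k1, ⟨k2, k3⟩, k4, k5⟩ := hy
      have e : s = 1 - t := by linarith
      subst e
      simp only [Set.mem_ofPred_eq, Pi.add_apply, Pi.smul_apply, smul_eq_mul]
      refine ⟨?_, ⟨?_, ?_⟩, ?_, ?_⟩ <;> nlinarith
  · rintro x ⟨h1, ⟨h2, h3⟩, h4, h5⟩
    set V : Set (Fin 2 → ℝ) := {![-a, 0], ![0, 1], ![0, -1], ![b, 1], ![b, -1]} with hV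
    have hc := convex_convexHull ℝ V
    have m1 : ![-a, 0] ∈ convexHull ℝ V := subset_convexHull _ _ (by simp [hV])
    have m2 : ![0, 1] ∈ convexHull ℝ V := subset_convexHull _ _ (by simp [hV])
    have m3 : ![0, -1] ∈ convexHull ℝ V := subset_convexHull _ _ (by simp [hV])
    have m4 : ![b, 1] ∈ convexHull ℝ V := subset_convexHull _ _ (by simp [hV])
    have m5 : ![b, -1] ∈ convexHull ℝ V := subset_convexHull _ _ (by simp [hV])
    have key : ∀ y : ℝ, -1 ≤ y → y ≤ 1 → ![0, y] ∈ convexHull ℝ V := fun y hy hy' =>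
      conv_two hc m3 m2 ((1 + y) / 2) (by linarith) (by linarith) (by simp) (by simp; ring)
    rcases le_total 0 (x 0) with h | h
    · have n1 := key (x 1) h3 h2
      have n2 : ![b, x 1] ∈ convexHull ℝ V :=
        conv_two hc m5 m4 ((1 + x 1) / 2) (by linarith) (by linarith) (by simp; ring) (by simp; ring)
      exact conv_two hc n1 n2 (x 0 / b) (by positivity) ((div_le_one hb).2 h1)
        (by simp; field_simp) (by simp; ring)
    · have hn : 0 ≤ a + x 0 := by linarith
      rcases hn.eq_or_lt with h0 | h0
      · exact conv_two hc m1 m1 0 le_rfl zero_le_one (by simp; linarith)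
          (by simp; nlinarith)
      · have n1 := key (a * x 1 / (a + x 0)) (by rw [le_div_iff₀ h0]; linarith)
          (by rw [div_le_iff₀ h0]; linarith)
        exact conv_two hc m1 n1 ((a + x 0) / a) (by positivity)
          (by rw [div_le_one ha]; linarith) (by simp; field_simp; ring) (by simp; field_simp)

lemma int_formula (a b : ℝ) (ha : 0 < a) (hb : 0 < b) (f : ℝ → ℝ → ℝ)
    (hf : Continuous fun p : ℝ × ℝ => f p.1 p.2) :
    ∫ x in convexHull ℝ {![-a, 0], ![0, 1], ![0, -1], ![b, 1], ![b, -1]}, f (x 0) (x 1) =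
    (∫ x in (-a)..0, ∫ y in (-(1 + x / a))..(1 + x / a), f x y) +
      ∫ x in (0 : ℝ)..b, ∫ y in (-1 : ℝ)..1, f x y := by
  have hcpt : IsCompact (convexHull ℝ
      ({![-a, 0], ![0, 1], ![0, -1], ![b, 1], ![b, -1]} : Set (Fin 2 → ℝ))) :=
    Set.Finite.isCompact_convexHull ℝ (Set.toFinite _)
  rw [hull_eq a b ha hb] at *
  set S := {x : Fin 2 → ℝ | x 0 ≤ b ∧ (x 1 ≤ 1 ∧ -1 ≤ x 1) ∧
      a * x 1 ≤ a + x 0 ∧ -(a * x 1) ≤ a + x 0} with hS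
  set T := {x : ℝ × ℝ | x.1 ≤ b ∧ (x.2 ≤ 1 ∧ -1 ≤ x.2) ∧
      a * x.2 ≤ a + x.1 ∧ -(a * x.2) ≤ a + x.1} with hT
  have hST : S = (MeasurableEquiv.finTwoArrow (α := ℝ)) ⁻¹' T := by
    ext x; simp [hS, hT, MeasurableEquiv.finTwoArrow]
  have mp := volume_preserving_finTwoArrow ℝ
  have me := (MeasurableEquiv.finTwoArrow (α := ℝ)).measurableEmbedding
  have hint : IntegrableOn (fun p : ℝ × ℝ => f p.1 p.2) T := by
    rw [← mp.integrableOn_comp_preimage me, ← hST]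
    refine ContinuousOn.integrableOn_compact hcpt (Continuous.continuousOn ?_)
    exact hf.comp ((continuous_apply 0).prodMk (continuous_apply 1))
  have hTm : MeasurableSet T := by
    apply IsClosed.measurableSet
    simp only [hT, Set.ofPred_and]
    refine IsClosed.inter ?_ (IsClosed.inter (IsClosed.inter ?_ ?_) (IsClosed.inter ?_ ?_)) <;>
      exact isClosed_le (by fun_prop) (by fun_prop)
  have h1 : ∫ x in S, f (x 0) (x 1) = ∫ p in T, f p.1 p.2 := by
    rw [hST, ← mp.setIntegral_preimage_emb me]
    rfl
  have hint' := (integrable_indicator_iff hTm).2 hint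
  rw [h1, ← integral_indicator hTm, Measure.volume_eq_prod, integral_prod _ hint']
  have hI := hint'.integral_prod_left
  set g := fun x => ∫ y, T.indicator (fun p : ℝ × ℝ => f p.1 p.2) (x, y) with hg
  have g0 : ∀ x, x ∉ Set.Ioc (-a) b → x ≠ -a → g x = 0 := by
    intro x hx hx'
    have : ∀ y, T.indicator (fun p : ℝ × ℝ => f p.1 p.2) (x, y) = 0 := by
      intro y
      apply Set.indicator_of_notMem
      rintro ⟨q1, -, q2, q3⟩
      simp only at q1 q2 q3
      exact hx ⟨lt_of_le_of_ne (by linarith) (Ne.symm hx'), q1⟩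
    simp [hg, this]
  have gin : ∀ x c, 0 ≤ c → (∀ y, (x, y) ∈ T ↔ y ∈ Set.Icc (-c) c) →
      g x = ∫ y in (-c)..c, f x y := by
    intro x c hc h
    rw [intervalIntegral.integral_of_le (by linarith), ← integral_Icc_eq_integral_Ioc,
      ← integral_indicator measurableSet_Icc]
    refine integral_congr_ae (Filter.Eventually.of_forall fun y => ?_)
    dsimp only
    by_cases hy : (x, y) ∈ T
    · rw [Set.indicator_of_mem hy, Set.indicator_of_mem ((h y).1 hy)]
    · rw [Set.indicator_of_notMem hy, Set.indicator_of_notMem (fun k => hy ((h y).2 k))]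
  have e1 : ∫ x, g x = ∫ x in (-a)..b, g x := by
    rw [intervalIntegral.integral_of_le (by linarith), ← integral_Icc_eq_integral_Ioc,
      setIntegral_eq_integral_of_forall_compl_eq_zero]
    intro x hx
    apply g0 x (fun h => hx ⟨h.1.le, h.2⟩)
    rintro rfl
    exact hx ⟨le_rfl, by linarith⟩
  change ∫ x, g x = _
  rw [e1, ← intervalIntegral.integral_add_adjacent_intervals (b := 0)
    hI.intervalIntegrable hI.intervalIntegrable]
  congr 1
  · apply intervalIntegral.integral_congr
    intro x hx
    rw [Set.uIcc_of_le (by linarith)] at hx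
    have e : a * (1 + x / a) = a + x := by field_simp
    have e3 : 1 + x / a ≤ 1 := by
      have := div_nonpos_of_nonpos_of_nonneg hx.2 ha.le
      linarith
    have e2 : 0 ≤ 1 + x / a := by
      by_contra! h
      nlinarith [hx.1]
    apply gin x _ e2
    intro y
    simp only [hT, Set.mem_ofPred_eq, ← e, Set.mem_Icc, ← mul_neg, mul_le_mul_iff_right₀ ha]
    constructor
    · rintro ⟨q1, q2, q3, q4⟩
      constructor <;> linarith
    · rintro ⟨q1, q2⟩
      refine ⟨?_, ⟨?_, ?_⟩, ?_, ?_⟩ <;> linarith [hx.2]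
  · apply intervalIntegral.integral_congr
    intro x hx
    rw [Set.uIcc_of_le (by linarith)] at hx
    apply gin x _ zero_le_one
    intro y
    simp only [hT, Set.mem_ofPred_eq, Set.mem_Icc]
    constructor
    · rintro ⟨q1, q2, q3, q4⟩
      constructor <;> linarith
    · rintro ⟨q1, q2⟩
      refine ⟨hx.2, ⟨?_, ?_⟩, ?_, ?_⟩ <;> nlinarith [hx.1]

lemma poly_int (a c0 c1 c2 c3 u v : ℝ) :
    ∫ x in u..v, (c0 + c1 * x + c2 * x ^ 2 + c3 * x ^ 3) =
      c0 * (v - u) + c1 * (v ^ 2 - u ^ 2) / 2 + c2 * (v ^ 3 - u ^ 3) / 3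
        + c3 * (v ^ 4 - u ^ 4) / 4 := by
  have h : ∀ x ∈ Set.uIcc u v, HasDerivAt
      (fun x : ℝ => c0 * x + c1 * x ^ 2 / 2 + c2 * x ^ 3 / 3 + c3 * x ^ 4 / 4)
      (c0 + c1 * x + c2 * x ^ 2 + c3 * x ^ 3) x := by
    intro x _
    have := ((((hasDerivAt_id x).const_mul c0).add
      ((((hasDerivAt_id x).pow 2).const_mul c1).div_const 2)).add
      ((((hasDerivAt_id x).pow 3).const_mul c2).div_const 3)).add
      ((((hasDerivAt_id x).pow 4).const_mul c3).div_const 4)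
    refine this.congr_deriv ?_
    simp
    ring
  rw [intervalIntegral.integral_eq_sub_of_hasDerivAt h
    (Continuous.intervalIntegrable (by fun_prop) _ _)]
  ring

theorem stmt17 :
    (volume P₀).toReal = (3 : ℝ) ^ ((1 : ℝ) / 4) * (1 + 2 / 3 * Real.sqrt 3) ∧
    inertia P₀ 0 0 = (3 : ℝ) ^ ((1 : ℝ) / 4) * (2 / 9 + Real.sqrt 3 / 6) ∧
    inertia P₀ 1 1 = (3 : ℝ) ^ ((1 : ℝ) / 4) * (1 / 6 + 2 / 9 * Real.sqrt 3) ∧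
    inertia P₀ 0 1 = 0 ∧
    ((volume P₀).toReal ^ 2 • (1 : Matrix (Fin 2) (Fin 2) ℝ) - 16 • inertia P₀ ^ 2).det
      = 1 / 729 * (12 * Real.sqrt 3 + 17) * (4 * Real.sqrt 3 - 13) ∧
    ((volume P₀).toReal ^ 2 • (1 : Matrix (Fin 2) (Fin 2) ℝ) - 16 • inertia P₀ ^ 2).det < 0 := by
  set a : ℝ := (3 : ℝ) ^ ((1 : ℝ) / 4) with ha'
  set b : ℝ := (3 : ℝ) ^ (-(1 : ℝ) / 4) with hb'
  set s := Real.sqrt 3 with hs'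
  have ha : 0 < a := by positivity
  have hb : 0 < b := by positivity
  have hs : s ^ 2 = 3 := Real.sq_sqrt (by norm_num)
  have has : a ^ 2 = s := by
    rw [ha', hs', Real.sqrt_eq_rpow, ← Real.rpow_natCast, ← Real.rpow_mul (by norm_num)]
    norm_num
  have hab : a * b = 1 := by
    rw [ha', hb', ← Real.rpow_add (by norm_num)]
    norm_num
  have hbs : b = a * s / 3 := by
    have : b * (s ^ 2) = a * s := by rw [pow_two, ← has]; linear_combination (a ^ 3) * hab
    rw [hs] at this; linarith
  have hP : P₀ = convexHull ℝ {![-a, 0], ![0, 1], ![0, -1], ![b, 1], ![b, -1]} := rfl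
  have hV : (volume P₀).toReal = a * (1 + 2 / 3 * s) := by
    have h := int_formula a b ha hb (fun _ _ => 1) (by fun_prop)
    rw [← hP] at h
    have h2 : ∫ x in P₀, (1 : ℝ) = (volume P₀).toReal := by simp [Measure.real]
    rw [← h2, h]
    have e : ∀ x : ℝ, ∫ y in (-(1 + x / a))..(1 + x / a), (1 : ℝ) =
        2 + (2 / a) * x + 0 * x ^ 2 + 0 * x ^ 3 := by
      intro x; simp; ring
    simp only [e]
    rw [poly_int a, hbs]
    simp
    field_simp
    ring
  have h00 : inertia P₀ 0 0 = a * (2 / 9 + s / 6) := by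
    have h := int_formula a b ha hb (fun x _ => x * x) (by fun_prop)
    rw [← hP] at h
    change ∫ x in P₀, x 0 * x 0 = _
    rw [h]
    have e : ∀ x : ℝ, ∫ y in (-(1 + x / a))..(1 + x / a), x * x =
        0 + 0 * x + 2 * x ^ 2 + (2 / a) * x ^ 3 := by
      intro x; simp; ring
    have e' : ∀ x : ℝ, ∫ y in (-1 : ℝ)..1, x * x =
        0 + 0 * x + 2 * x ^ 2 + 0 * x ^ 3 := by
      intro x; simp; ring
    simp only [e, e']
    rw [poly_int a, poly_int a, hbs]
    field_simp
    grind
  have h11 : inertia P₀ 1 1 = a * (1 / 6 + 2 / 9 * s) := by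
    have h := int_formula a b ha hb (fun _ y => y * y) (by fun_prop)
    rw [← hP] at h
    change ∫ x in P₀, x 1 * x 1 = _
    rw [h]
    have e : ∀ x : ℝ, ∫ y in (-(1 + x / a))..(1 + x / a), y * y =
        2 / 3 + (2 / a) * x + (2 / a ^ 2) * x ^ 2 + (2 / 3 / a ^ 3) * x ^ 3 := by
      intro x; simp only [← pow_two, integral_pow]; push_cast; field_simp; ring
    have e' : ∀ x : ℝ, ∫ y in (-1 : ℝ)..1, y * y =
        2 / 3 + 0 * x + 0 * x ^ 2 + 0 * x ^ 3 := by
      intro x; simp only [← pow_two, integral_pow]; norm_num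
    simp only [e]
    simp only [e' 0]
    rw [poly_int a, intervalIntegral.integral_const, hbs]
    simp only [smul_eq_mul]
    field_simp
    ring
  have h01 : inertia P₀ 0 1 = 0 := by
    have h := int_formula a b ha hb (fun x y => x * y) (by fun_prop)
    rw [← hP] at h
    change ∫ x in P₀, x 0 * x 1 = _
    rw [h]
    have e : ∀ x c : ℝ, ∫ y in (-c)..c, x * y = 0 := by
      intro x c; rw [intervalIntegral.integral_const_mul, integral_id]; ring
    simp only [e]
    simp
  have h10 : inertia P₀ 1 0 = 0 := by
    rw [← h01]
    change ∫ x in P₀, x 1 * x 0 = ∫ x in P₀, x 0 * x 1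
    simp only [mul_comm]
  have hd : ((volume P₀).toReal ^ 2 • (1 : Matrix (Fin 2) (Fin 2) ℝ) - 16 • inertia P₀ ^ 2).det
      = 1 / 729 * (12 * s + 17) * (4 * s - 13) := by
    rw [Matrix.det_fin_two]
    simp only [Matrix.sub_apply, Matrix.smul_apply, pow_two (inertia P₀), Matrix.mul_apply,
      Fin.sum_univ_two, h00, h01, h10, h11, hV]
    simp
    have e1 : (a * (1 + 2 / 3 * s)) ^ 2 - 16 * (a * (2 / 9 + s / 6) * (a * (2 / 9 + s / 6)))
      = s * (17 + 12 * s) / 81 := by rw [← has] at *; grind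
    have e2 : (a * (1 + 2 / 3 * s)) ^ 2 - 16 * (a * (1 / 6 + 2 / 9 * s) * (a * (1 / 6 + 2 / 9 * s)))
      = s * (4 * s - 13) / 27 := by rw [← has] at *; grind
    norm_num at e1 e2 ⊢
    rw [e1, e2]
    linear_combination (17 + 12 * s) * (4 * s - 13) / 81 / 27 * hs
  refine ⟨hV, h00, h11, h01, hd, ?_⟩
  rw [hd]
  have s0 : 0 < s := by positivity
  have : s < 3 := by nlinarith
  exact mul_neg_of_pos_of_neg (by positivity) (by linarith)
end
end
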